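/- Let 1 < c < 37/18 with c ≠ 2. Then for every fixed η > 0, ∫_{τ}^{K} |S(x)|⁴ |Φ(x)|² dx ≪ (X^{4−c} + X²)·X^η, where the implied constant depends only on c and η. -/

import Mathlib

open MeasureTheory

noncomputable def e (t : ℝ) : ℂ := Complex.exp (2 * Real.pi * Complex.I * t)

/-- The exponential sum `S(x) = Σ_{X/2 < p ≤ X} (log p) e(p^c x)` over primes. -/
noncomputable def S (X c : ℝ) (x : ℝ) : ℂ :=
  ∑ p ∈ (Finset.range (⌈X⌉₊ + 1)).filter
      (fun p : ℕ => p.Prime ∧ X / 2 < (p : ℝ) ∧ (p : ℝ) ≤ X),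
    (Real.log p : ℂ) * e ((p : ℝ) ^ c * x)



lemma e_add (a b : ℝ) : e (a + b) = e a * e b := by
  unfold e; rw [← Complex.exp_add]; congr 1; push_cast; ring

lemma norm_e (t : ℝ) : ‖e t‖ = 1 := by
  unfold e
  rw [show (2 * (Real.pi : ℂ) * Complex.I * (t : ℂ)) = ((2 * Real.pi * t : ℝ) : ℂ) * Complex.I by
    push_cast; ring]
  exact Complex.norm_exp_ofReal_mul_I _

lemma e_zero : e 0 = 1 := by simp [e]

lemma conj_e (t : ℝ) : (starRingEnd ℂ) (e t) = e (-t) := by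
  unfold e; rw [← Complex.exp_conj]; congr 1; simp [Complex.conj_ofNat]

lemma continuous_e : Continuous e := by unfold e; fun_prop

@[fun_prop]
lemma continuous_e_comp {α : Type*} [TopologicalSpace α] {f : α → ℝ} (hf : Continuous f) :
    Continuous (fun x => e (f x)) := continuous_e.comp hf

lemma hasDerivAt_e_comp {f : ℝ → ℝ} {f' x : ℝ} (h : HasDerivAt f f' x) :
    HasDerivAt (fun x => e (f x)) (2 * Real.pi * Complex.I * f' * e (f x)) x := by
  unfold e
  have h1 : HasDerivAt (fun x => (f x : ℂ)) (f' : ℂ) x := h.ofReal_comp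
  have h2 := (h1.const_mul (2 * (Real.pi : ℂ) * Complex.I)).cexp
  convert h2 using 1; ring

lemma sq_expand {ι : Type*} (s : Finset ι) (μ : ι → ℝ) (b : ι → ℂ) (T : ℝ) :
    ((∫ u in (0:ℝ)..T, ∫ v in (0:ℝ)..T, ‖∑ i ∈ s, b i * e ((v - u) * μ i)‖ ^ 2 : ℝ) : ℂ) =
    ∑ i ∈ s, ∑ j ∈ s, b i * (starRingEnd ℂ) (b j) *
      ((‖∫ v in (0:ℝ)..T, e (v * (μ i - μ j))‖ ^ 2 : ℝ) : ℂ) := by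
  have key : ∀ u v : ℝ, ((‖∑ i ∈ s, b i * e ((v - u) * μ i)‖ ^ 2 : ℝ) : ℂ) =
      ∑ i ∈ s, ∑ j ∈ s, b i * (starRingEnd ℂ) (b j) *
        (e (v * (μ i - μ j)) * e (-(u * (μ i - μ j)))) := by
    intro u v
    rw [Complex.ofReal_pow, ← Complex.mul_conj', map_sum, Finset.sum_mul_sum]
    refine Finset.sum_congr rfl fun i _ => Finset.sum_congr rfl fun j _ => ?_
    rw [map_mul, conj_e, ← e_add,
      show b i * e ((v - u) * μ i) * ((starRingEnd ℂ) (b j) * e (-((v - u) * μ j))) =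
        b i * (starRingEnd ℂ) (b j) * (e ((v - u) * μ i) * e (-((v - u) * μ j))) by ring,
      ← e_add]
    congr 2; ring
  rw [← intervalIntegral.integral_ofReal]
  simp_rw [← intervalIntegral.integral_ofReal, key]
  have i1 : ∀ u : ℝ, (∫ v in (0:ℝ)..T, ∑ i ∈ s, ∑ j ∈ s, b i * (starRingEnd ℂ) (b j) *
        (e (v * (μ i - μ j)) * e (-(u * (μ i - μ j))))) =
      ∑ i ∈ s, ∑ j ∈ s, b i * (starRingEnd ℂ) (b j) *
        ((∫ v in (0:ℝ)..T, e (v * (μ i - μ j))) * e (-(u * (μ i - μ j)))) := by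
    intro u
    rw [intervalIntegral.integral_finsetSum]
    · refine Finset.sum_congr rfl fun i _ => ?_
      rw [intervalIntegral.integral_finsetSum]
      · refine Finset.sum_congr rfl fun j _ => ?_
        rw [intervalIntegral.integral_const_mul, intervalIntegral.integral_mul_const]
      · intro j _; exact Continuous.intervalIntegrable (by fun_prop) _ _
    · intro j _; exact Continuous.intervalIntegrable (by fun_prop) _ _
  simp_rw [i1]
  rw [intervalIntegral.integral_finsetSum]
  · refine Finset.sum_congr rfl fun i _ => ?_
    rw [intervalIntegral.integral_finsetSum]
    · refine Finset.sum_congr rfl fun j _ => ?_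
      rw [intervalIntegral.integral_const_mul, intervalIntegral.integral_const_mul]
      rw [Complex.ofReal_pow, ← Complex.mul_conj']
      congr 2
      simp only [intervalIntegral, map_sub, ← integral_conj, conj_e]
    · intro j _; exact Continuous.intervalIntegrable (by fun_prop) _ _
  · intro j _; exact Continuous.intervalIntegrable (by fun_prop) _ _

lemma majorant_sq {ι : Type*} (s : Finset ι) (μ : ι → ℝ) (b : ι → ℂ) (β : ι → ℝ)
    (hb : ∀ i ∈ s, ‖b i‖ ≤ β i) (T : ℝ) (hT : 0 < T) :
    ∫ t in (0:ℝ)..T, ‖∑ i ∈ s, b i * e (t * μ i)‖ ^ 2 ≤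
      2 * ∫ t in (-(2 * T))..(2 * T), ‖∑ i ∈ s, (β i : ℂ) * e (t * μ i)‖ ^ 2 := by
  set D : (ι → ℂ) → ℝ := fun b =>
    ∫ u in (0:ℝ)..(2*T), ∫ v in (0:ℝ)..(2*T), ‖∑ i ∈ s, b i * e ((v - u) * μ i)‖ ^ 2 with hD
  have h1 : D b ≤ D (fun i => (β i : ℂ)) := by
    have e1 := sq_expand s μ b (2*T)
    have e2 := sq_expand s μ (fun i => (β i : ℂ)) (2*T)
    have n1 : D b ≤ ‖((D b : ℝ) : ℂ)‖ := by
      rw [Complex.norm_real]; exact le_abs_self _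
    refine n1.trans ?_
    have e3 : D (fun i => (β i : ℂ)) = ∑ i ∈ s, ∑ j ∈ s, β i * β j *
        (‖∫ v in (0:ℝ)..(2*T), e (v * (μ i - μ j))‖ ^ 2) := by
      have : ((D (fun i => (β i : ℂ)) : ℝ) : ℂ) = ((∑ i ∈ s, ∑ j ∈ s, β i * β j *
        (‖∫ v in (0:ℝ)..(2*T), e (v * (μ i - μ j))‖ ^ 2) : ℝ) : ℂ) := by
        rw [hD]; simp only []; rw [e2]; simp
      exact_mod_cast this
    rw [e3, hD]; simp only []; rw [e1]
    refine (norm_sum_le _ _).trans (Finset.sum_le_sum fun i hi => ?_)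
    refine (norm_sum_le _ _).trans (Finset.sum_le_sum fun j hj => ?_)
    rw [norm_mul, norm_mul, Complex.norm_real, RCLike.norm_conj, Real.norm_of_nonneg (by positivity)]
    have := hb i hi
    have := hb j hj
    have := (norm_nonneg (b i)).trans (hb i hi)
    gcongr
  have cont : ∀ b : ι → ℂ, Continuous (fun t : ℝ => ‖∑ i ∈ s, b i * e (t * μ i)‖ ^ 2) := by
    intro b; fun_prop
  have inner : ∀ (b : ι → ℂ) (u : ℝ),
      (∫ v in (0:ℝ)..(2*T), ‖∑ i ∈ s, b i * e ((v - u) * μ i)‖ ^ 2) =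
      ∫ t in (-u)..(2*T - u), ‖∑ i ∈ s, b i * e (t * μ i)‖ ^ 2 := by
    intro b u
    have := intervalIntegral.integral_comp_sub_right (a := 0) (b := 2*T)
      (fun t : ℝ => ‖∑ i ∈ s, b i * e (t * μ i)‖ ^ 2) u
    simpa using this
  have contD : ∀ b : ι → ℂ, Continuous (fun u : ℝ =>
      ∫ t in (-u)..(2*T - u), ‖∑ i ∈ s, b i * e (t * μ i)‖ ^ 2) := by
    intro b
    have := intervalIntegral.continuous_parametric_intervalIntegral_of_continuous'
      (f := fun u v : ℝ => ‖∑ i ∈ s, b i * e ((v - u) * μ i)‖ ^ 2) (μ := volume)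
      (by simp only [Function.uncurry_def]; fun_prop) 0 (2*T)
    simpa only [inner] using this
  have h2 : T * (∫ t in (0:ℝ)..T, ‖∑ i ∈ s, b i * e (t * μ i)‖ ^ 2) ≤ D b := by
    rw [hD]; simp only [inner]
    have a1 : T * (∫ t in (0:ℝ)..T, ‖∑ i ∈ s, b i * e (t * μ i)‖ ^ 2) ≤
        ∫ u in (0:ℝ)..T, ∫ t in (-u)..(2*T - u), ‖∑ i ∈ s, b i * e (t * μ i)‖ ^ 2 := by
      have := intervalIntegral.integral_mono_on (a := 0) (b := T) (μ := volume)
        (f := fun u : ℝ => ∫ t in (0:ℝ)..T, ‖∑ i ∈ s, b i * e (t * μ i)‖ ^ 2)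
        (g := fun u : ℝ => ∫ t in (-u)..(2*T - u), ‖∑ i ∈ s, b i * e (t * μ i)‖ ^ 2) hT.le
        (by simp) ((contD b).intervalIntegrable _ _) (by
          intro u hu
          refine intervalIntegral.integral_mono_interval (by linarith [hu.1]) hT.le
            (by linarith [hu.2]) (Filter.Eventually.of_forall fun t => by positivity)
            ((cont b).intervalIntegrable _ _))
      simpa using this
    refine a1.trans ?_
    refine intervalIntegral.integral_mono_interval le_rfl hT.le (by linarith) ?_
            ((contD b).intervalIntegrable _ _)
    refine Filter.Eventually.of_forall fun u => ?_
    exact intervalIntegral.integral_nonneg (by linarith) fun t _ => by positivity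
  have h3 : D (fun i => (β i : ℂ)) ≤ (2 * T) *
      ∫ t in (-(2 * T))..(2 * T), ‖∑ i ∈ s, (β i : ℂ) * e (t * μ i)‖ ^ 2 := by
    rw [hD]; simp only [inner]
    have := intervalIntegral.integral_mono_on (a := 0) (b := 2*T) (μ := volume)
        (g := fun u : ℝ => ∫ t in (-(2 * T))..(2 * T), ‖∑ i ∈ s, (β i : ℂ) * e (t * μ i)‖ ^ 2)
        (f := fun u : ℝ => ∫ t in (-u)..(2*T - u), ‖∑ i ∈ s, (β i : ℂ) * e (t * μ i)‖ ^ 2)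
        (by linarith) ((contD _).intervalIntegrable _ _) (by simp) (by
          intro u hu
          refine intervalIntegral.integral_mono_interval (by linarith [hu.2]) (by linarith)
            (by linarith [hu.1]) (Filter.Eventually.of_forall fun t => by positivity)
            ((cont _).intervalIntegrable _ _))
    simpa using this
  have h4 := (h2.trans h1).trans h3
  nlinarith

lemma sq_prod (s : Finset ℕ) (a : ℕ → ℂ) (l : ℕ → ℝ) (t : ℝ) :
    ‖∑ n ∈ s, a n * e (t * l n)‖ ^ 4 =
    ‖∑ p ∈ s ×ˢ s, (a p.1 * a p.2) * e (t * (l p.1 + l p.2))‖ ^ 2 := by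
  rw [show (4:ℕ) = 2 * 2 from rfl, pow_mul, ← norm_pow, sq (∑ n ∈ s, _), Finset.sum_mul_sum,
    ← Finset.sum_product']
  congr 2
  refine Finset.sum_congr rfl fun p _ => ?_
  rw [mul_add, e_add]; ring

lemma majorant4 (s : Finset ℕ) (a : ℕ → ℂ) (w : ℕ → ℝ) (l : ℕ → ℝ)
    (h : ∀ n ∈ s, ‖a n‖ ≤ w n) (T : ℝ) (hT : 0 < T) :
    ∫ t in (0:ℝ)..T, ‖∑ n ∈ s, a n * e (t * l n)‖ ^ 4 ≤
      4 * ∫ t in (0:ℝ)..(2*T), ‖∑ n ∈ s, (w n : ℂ) * e (t * l n)‖ ^ 4 := by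
  have h1 := majorant_sq (s ×ˢ s) (fun p => l p.1 + l p.2) (fun p => a p.1 * a p.2)
    (fun p => w p.1 * w p.2) (by
      intro p hp
      rw [Finset.mem_product] at hp
      rw [norm_mul]
      have := (norm_nonneg _).trans (h _ hp.1)
      exact mul_le_mul (h _ hp.1) (h _ hp.2) (norm_nonneg _) this) T hT
  simp only [sq_prod]
  refine h1.trans ?_
  simp only [Complex.ofReal_mul]
  simp only [← sq_prod s (fun n => (w n : ℂ))]
  have cont : Continuous (fun t : ℝ => ‖∑ n ∈ s, (w n : ℂ) * e (t * l n)‖ ^ 4) := by fun_prop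
  rw [← intervalIntegral.integral_add_adjacent_intervals (b := 0)
    (cont.intervalIntegrable _ _) (cont.intervalIntegrable _ _)]
  have : (∫ t in (-(2*T))..0, ‖∑ n ∈ s, (w n : ℂ) * e (t * l n)‖ ^ 4) =
      ∫ t in (0:ℝ)..(2*T), ‖∑ n ∈ s, (w n : ℂ) * e (t * l n)‖ ^ 4 := by
    have hn := intervalIntegral.integral_comp_neg (a := 0) (b := 2*T)
      (fun t : ℝ => ‖∑ n ∈ s, (w n : ℂ) * e (t * l n)‖ ^ 4)
    rw [neg_zero] at hn
    rw [← hn]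
    refine intervalIntegral.integral_congr fun t _ => ?_
    congr 1
    rw [← Complex.norm_conj, map_sum]
    congr 1
    refine Finset.sum_congr rfl fun n _ => ?_
    rw [map_mul, conj_e, Complex.conj_ofReal]; congr 2; ring
  rw [this]; linarith


def HH (α θ : ℝ) : Prop := ∀ R : ℝ, 1 ≤ R → ∃ C : ℝ, 0 < C ∧ ∀ Z : ℝ, 1 ≤ Z → ∀ s : Finset ℕ,
  (∀ n ∈ s, Z / R ≤ (n : ℝ) ∧ (n : ℝ) ≤ Z) → ∀ a : ℕ → ℂ, (∀ n ∈ s, ‖a n‖ ≤ 1) →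
  ∫ t in (0:ℝ)..(Z ^ 2), ‖∑ n ∈ s, a n * e (t * ((n : ℝ) / Z) ^ α)‖ ^ 4 ≤ C * Z ^ (4 + θ)

lemma card_le_of_le {s : Finset ℕ} {Z : ℝ} (hZ : 1 ≤ Z) (hs : ∀ n ∈ s, (n : ℝ) ≤ Z) :
    (s.card : ℝ) ≤ 2 * Z := by
  have h1 : s ⊆ Finset.range (⌊Z⌋₊ + 1) := by
    intro n hn
    rw [Finset.mem_range]
    have := Nat.le_floor (hs n hn)
    omega
  have h2 := Finset.card_le_card h1
  rw [Finset.card_range] at h2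
  have h3 : (s.card : ℝ) ≤ (⌊Z⌋₊ : ℝ) + 1 := by exact_mod_cast h2
  have h4 := Nat.floor_le (by linarith : 0 ≤ Z)
  linarith

lemma norm_sum_le_card (s : Finset ℕ) (a : ℕ → ℂ) (l : ℕ → ℝ) {B : ℝ}
    (h : ∀ n ∈ s, ‖a n‖ ≤ B) : ‖∑ n ∈ s, a n * e (l n)‖ ≤ s.card * B := by
  refine (norm_sum_le _ _).trans ?_
  refine (Finset.sum_le_card_nsmul _ _ B fun n hn => ?_).trans (by simp)
  rw [norm_mul, norm_e, mul_one]; exact h n hn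

lemma HH_trivial (α : ℝ) : HH α 2 := by
  intro R hR
  refine ⟨16, by norm_num, fun Z hZ s hs a ha => ?_⟩
  have h1 : ∀ t : ℝ, ‖∑ n ∈ s, a n * e (t * ((n : ℝ) / Z) ^ α)‖ ^ 4 ≤ 16 * Z ^ 4 := by
    intro t
    have := norm_sum_le_card s a (fun n => t * ((n : ℝ) / Z) ^ α) ha
    have h2 := card_le_of_le hZ (fun n hn => (hs n hn).2)
    calc _ ≤ (2 * Z) ^ 4 := by gcongr; linarith
      _ = _ := by ring
  have h3 := intervalIntegral.integral_mono_on (a := 0) (b := Z^2) (μ := volume)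
    (f := fun t : ℝ => ‖∑ n ∈ s, a n * e (t * ((n : ℝ) / Z) ^ α)‖ ^ 4)
    (g := fun _ => 16 * Z ^ 4) (by positivity)
    (Continuous.intervalIntegrable (by fun_prop) _ _) (by simp) (fun t _ => h1 t)
  refine h3.trans ?_
  rw [intervalIntegral.integral_const, smul_eq_mul, show (4:ℝ) + 2 = (6:ℕ) by norm_num,
    Real.rpow_natCast]
  apply le_of_eq; ring

lemma covering {F : ℝ → ℝ} (hF : Continuous F) (h0 : ∀ t, 0 ≤ F t) {T0 T B : ℝ} (hT0 : 0 < T0)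
    (hT : 0 ≤ T) (hB : 0 ≤ B) (h : ∀ k : ℕ, ∫ t in (0:ℝ)..T0, F (t + k * T0) ≤ B) :
    ∫ t in (0:ℝ)..T, F t ≤ (T / T0 + 1) * B := by
  set N := ⌈T / T0⌉₊ with hN
  have hN1 : T ≤ N * T0 := by
    have := Nat.le_ceil (T / T0)
    rwa [div_le_iff₀ hT0] at this
  have hN2 : (N : ℝ) ≤ T / T0 + 1 := (Nat.ceil_lt_add_one (by positivity)).le
  have h1 : ∫ t in (0:ℝ)..T, F t ≤ ∫ t in (0:ℝ)..(N * T0), F t :=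
    intervalIntegral.integral_mono_interval le_rfl hT hN1 (Filter.Eventually.of_forall h0)
      (hF.intervalIntegrable _ _)
  have h2 := intervalIntegral.sum_integral_adjacent_intervals (f := F) (μ := volume) (n := N)
    (a := fun k => (k : ℝ) * T0) (fun k _ => hF.intervalIntegrable _ _)
  simp only [Nat.cast_zero, zero_mul] at h2
  rw [← h2] at h1
  refine h1.trans ?_
  have h3 : ∀ k ∈ Finset.range N, ∫ t in ((k:ℝ) * T0)..(((k+1 : ℕ) : ℝ) * T0), F t ≤ B := by
    intro k _
    have := h k
    rw [intervalIntegral.integral_comp_add_right] at this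
    convert this using 2 <;> push_cast <;> ring
  refine (Finset.sum_le_card_nsmul _ _ B h3).trans ?_
  rw [Finset.card_range, nsmul_eq_mul]
  gcongr

lemma HH_long {α θ : ℝ} (h : HH α θ) (R : ℝ) (hR : 1 ≤ R) : ∃ C : ℝ, 0 < C ∧ ∀ Z : ℝ, 1 ≤ Z →
    ∀ s : Finset ℕ,
  (∀ n ∈ s, Z / R ≤ (n : ℝ) ∧ (n : ℝ) ≤ Z) → ∀ a : ℕ → ℂ, ∀ A : ℝ, 0 ≤ A → (∀ n ∈ s, ‖a n‖ ≤ A) →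
  ∀ T : ℝ, 0 ≤ T →
  ∫ t in (0:ℝ)..T, ‖∑ n ∈ s, a n * e (t * ((n : ℝ) / Z) ^ α)‖ ^ 4 ≤
    (T / Z ^ 2 + 1) * (C * A ^ 4 * Z ^ (4 + θ)) := by
  obtain ⟨C, hC, H⟩ := h R hR
  refine ⟨C, hC, fun Z hZ s hs a A hA ha T hT => ?_⟩
  have hZ0 : 0 < Z := by linarith
  have hZp : 0 < Z ^ (4 + θ) := Real.rpow_pos_of_pos hZ0 _
  refine covering (by fun_prop) (fun t => by positivity) (by positivity) hT (by positivity) ?_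
  intro k
  rcases hA.eq_or_lt with hA0 | hA0
  · have : ∀ t : ℝ, ∑ n ∈ s, a n * e (t * ((n : ℝ) / Z) ^ α) = 0 := by
      intro t
      refine Finset.sum_eq_zero fun n hn => ?_
      have := ha n hn
      rw [← hA0, norm_le_zero_iff] at this
      rw [this, zero_mul]
    simp only [this]; simp [← hA0]
  have H1 := H Z hZ s hs (fun n => a n * e (k * Z^2 * ((n : ℝ) / Z) ^ α) / A) (by
    intro n hn
    rw [norm_div, norm_mul, norm_e, mul_one, Complex.norm_real, Real.norm_of_nonneg hA,
      div_le_one hA0]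
    exact ha n hn)
  have : ∀ t : ℝ, ‖∑ n ∈ s, a n * e ((t + k * Z^2) * ((n : ℝ) / Z) ^ α)‖ ^ 4 =
      A ^ 4 * ‖∑ n ∈ s, a n * e (k * Z^2 * ((n : ℝ) / Z) ^ α) / A * e (t * ((n : ℝ) / Z) ^ α)‖ ^ 4 := by
    intro t
    rw [← mul_pow]
    congr 1
    nth_rewrite 1 [← Real.norm_of_nonneg hA]
    rw [← Complex.norm_real, ← norm_mul, Finset.mul_sum]
    congr 1
    refine Finset.sum_congr rfl fun n _ => ?_
    have : (A : ℂ) ≠ 0 := by exact_mod_cast hA0.ne'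
    rw [add_mul, e_add]; field_simp
  simp only [this]
  rw [intervalIntegral.integral_const_mul]
  calc _ ≤ A ^ 4 * (C * Z ^ (4 + θ)) := by gcongr
    _ = _ := by ring


lemma ibp_e {P P' G G' : ℝ → ℝ} {a b : ℝ} (hab : a ≤ b)
    (hP : ∀ x ∈ Set.Icc a b, HasDerivAt P (P' x) x)
    (hG : ∀ x ∈ Set.Icc a b, HasDerivAt G (G' x) x)
    (hP' : ContinuousOn P' (Set.Icc a b)) (hG' : ContinuousOn G' (Set.Icc a b)) :
    2 * Real.pi * Complex.I * ∫ x in a..b, ((P x * G' x : ℝ) : ℂ) * e (G x) =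
      P b * e (G b) - P a * e (G a) - ∫ x in a..b, (P' x : ℂ) * e (G x) := by
  have huI : Set.uIcc a b = Set.Icc a b := Set.uIcc_of_le hab
  have cG : ContinuousOn G (Set.Icc a b) := fun x hx => (hG x hx).continuousAt.continuousWithinAt
  have cE : ContinuousOn (fun x => e (G x)) (Set.Icc a b) := continuous_e.comp_continuousOn cG
  have h := intervalIntegral.integral_mul_deriv_eq_deriv_mul (a := a) (b := b)
    (u := fun x => (P x : ℂ)) (u' := fun x => (P' x : ℂ)) (v := fun x => e (G x))
    (v' := fun x => 2 * Real.pi * Complex.I * G' x * e (G x))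
    (by rw [huI]; exact fun x hx => (hP x hx).ofReal_comp)
    (by rw [huI]; exact fun x hx => hasDerivAt_e_comp (hG x hx))
    (by
      apply ContinuousOn.intervalIntegrable; rw [huI]
      exact Complex.continuous_ofReal.comp_continuousOn hP')
    (by
      apply ContinuousOn.intervalIntegrable; rw [huI]
      exact (continuousOn_const.mul (Complex.continuous_ofReal.comp_continuousOn hG')).mul cE)
  rw [← h, ← intervalIntegral.integral_const_mul]
  refine intervalIntegral.integral_congr fun x _ => ?_
  push_cast; ring

lemma ibp_bound {P P' G G' : ℝ → ℝ} {a b : ℝ} (hab : a ≤ b)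
    (hP : ∀ x ∈ Set.Icc a b, HasDerivAt P (P' x) x)
    (hG : ∀ x ∈ Set.Icc a b, HasDerivAt G (G' x) x)
    (hP' : ContinuousOn P' (Set.Icc a b)) (hG' : ContinuousOn G' (Set.Icc a b)) :
    ‖∫ x in a..b, ((P x * G' x : ℝ) : ℂ) * e (G x)‖ ≤ |P b| + |P a| +
      ‖∫ x in a..b, (P' x : ℂ) * e (G x)‖ := by
  have h := congrArg norm (ibp_e hab hP hG hP' hG')
  rw [norm_mul] at h
  have h1 : ‖2 * (Real.pi : ℂ) * Complex.I‖ = 2 * Real.pi := by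
    simp [abs_of_pos Real.pi_pos]
  rw [h1] at h
  have h2 : ‖(P b : ℂ) * e (G b) - P a * e (G a) - ∫ x in a..b, (P' x : ℂ) * e (G x)‖ ≤
      |P b| + |P a| + ‖∫ x in a..b, (P' x : ℂ) * e (G x)‖ := by
    refine (norm_sub_le _ _).trans ?_
    gcongr
    refine (norm_sub_le _ _).trans ?_
    simp [norm_e]
  have h3 := Real.pi_gt_three
  nlinarith [norm_nonneg (∫ x in a..b, ((P x * G' x : ℝ) : ℂ) * e (G x))]

lemma sd_half {ψ ψ1 ψ2 b b1 : ℝ → ℝ} {R k K B Y δ : ℝ} (hk : 0 < k) (hK : 0 ≤ K) (hB : 0 ≤ B)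
    (hY : 0 < Y) (hδ : 0 < δ) (hδR : δ ≤ R)
    (h1 : ∀ x, HasDerivAt ψ (ψ1 x) x) (h2 : ∀ x, HasDerivAt ψ1 (ψ2 x) x) (c2 : Continuous ψ2)
    (hb : ∀ x, HasDerivAt b (b1 x) x) (cb : Continuous b1)
    (hψ1 : ∀ y ∈ Set.Icc δ R, k * y ≤ |ψ1 y|) (hψ2 : ∀ y ∈ Set.Icc δ R, |ψ2 y| ≤ K)
    (hbB : ∀ y ∈ Set.Icc δ R, |b y| ≤ B) (hb1 : ∀ y ∈ Set.Icc δ R, |b1 y| ≤ B) :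
    ‖∫ y in δ..R, (b y : ℂ) * e (Y * ψ y)‖ ≤ (2 / k + R / k + K / k ^ 2) * B / (Y * δ) := by
  have hR : 0 < R := by linarith
  have ne : ∀ y ∈ Set.Icc δ R, ψ1 y ≠ 0 := by
    intro y hy h0
    have := hψ1 y hy
    rw [h0, abs_zero] at this
    nlinarith [hy.1]
  have cb0 : Continuous b := continuous_iff_continuousAt.2 fun x => (hb x).continuousAt
  have c1 : Continuous ψ1 := continuous_iff_continuousAt.2 fun x => (h2 x).continuousAt
  set P : ℝ → ℝ := fun y => b y / ψ1 y
  set P' : ℝ → ℝ := fun y => (b1 y * ψ1 y - b y * ψ2 y) / ψ1 y ^ 2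
  have cP' : ContinuousOn P' (Set.Icc δ R) := by
    apply ContinuousOn.div (by fun_prop) (by fun_prop)
    intro x hx; exact pow_ne_zero _ (ne x hx)
  have key := ibp_bound (P := P) (P' := P') (G := fun y => Y * ψ y) (G' := fun y => Y * ψ1 y) hδR
    (fun x hx => (hb x).div (h2 x) (ne x hx)) (fun x _ => (h1 x).const_mul Y) cP' (by fun_prop)
  have e1 : ∫ y in δ..R, ((P y * (Y * ψ1 y) : ℝ) : ℂ) * e (Y * ψ y) =
      Y * ∫ y in δ..R, (b y : ℂ) * e (Y * ψ y) := by
    rw [← intervalIntegral.integral_const_mul]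
    refine intervalIntegral.integral_congr fun x hx => ?_
    rw [Set.uIcc_of_le hδR] at hx
    have : P x * (Y * ψ1 x) = Y * b x := by
      simp only [P]; field_simp [ne x hx]
    simp only [this]; push_cast; ring
  rw [e1, norm_mul, Complex.norm_real, Real.norm_of_nonneg hY.le] at key
  have bP : ∀ y ∈ Set.Icc δ R, |P y| ≤ B / (k * δ) := by
    intro y hy
    simp only [P, abs_div]
    have := hψ1 y hy
    apply div_le_div₀ hB (hbB y hy) (by positivity)
    nlinarith [hy.1]
  set M := R / k * B + K / k ^ 2 * B
  have bP' : ∀ y ∈ Set.Icc δ R, |P' y| ≤ M * (y ^ 2)⁻¹ := by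
    intro y hy
    have hy0 : 0 < y := by linarith [hy.1]
    have hp := hψ1 y hy
    have hp0 : 0 < |ψ1 y| := by nlinarith
    have : P' y = b1 y / ψ1 y - b y * ψ2 y / ψ1 y ^ 2 := by
      simp only [P']; field_simp [ne y hy]
    rw [this]
    refine (abs_sub _ _).trans ?_
    rw [abs_div, abs_div, abs_mul, abs_pow]
    have t1 : |b1 y| / |ψ1 y| ≤ R / k * B * (y^2)⁻¹ := by
      calc |b1 y| / |ψ1 y| ≤ B / (k * y) := by
            apply div_le_div₀ hB (hb1 y hy) (by positivity) hp
        _ = y / k * B * (y^2)⁻¹ := by field_simp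
        _ ≤ _ := by gcongr; exact hy.2
    have t2 : |b y| * |ψ2 y| / |ψ1 y| ^ 2 ≤ K / k^2 * B * (y^2)⁻¹ := by
      calc _ ≤ B * K / (k * y) ^ 2 := by
            apply div_le_div₀ (by positivity) _ (by positivity) (by gcongr)
            exact mul_le_mul (hbB y hy) (hψ2 y hy) (abs_nonneg _) hB
        _ = _ := by field_simp
    simp only [M]; linarith
  have hM : 0 ≤ M := by positivity
  have t3 : ‖∫ x in δ..R, (P' x : ℂ) * e (Y * ψ x)‖ ≤ M / δ := by
    have cI : ContinuousOn (fun y : ℝ => M * (y ^ 2)⁻¹) (Set.Icc δ R) := by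
      apply continuousOn_const.mul
      apply ContinuousOn.inv₀ (by fun_prop)
      intro x hx; have h0 : 0 < x := lt_of_lt_of_le hδ hx.1
      positivity
    have := intervalIntegral.norm_integral_le_of_norm_le (μ := volume) hδR
      (f := fun x => (P' x : ℂ) * e (Y * ψ x)) (g := fun y => M * (y^2)⁻¹)
      (Filter.Eventually.of_forall fun x hx => by
        rw [norm_mul, norm_e, mul_one, Complex.norm_real]
        exact bP' x ⟨hx.1.le, hx.2⟩)
      (by apply ContinuousOn.intervalIntegrable; rw [Set.uIcc_of_le hδR]; exact cI)
    refine this.trans ?_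
    have ev := intervalIntegral.integral_eq_sub_of_hasDerivAt (a := δ) (b := R)
      (f := fun y : ℝ => -(M * y⁻¹)) (f' := fun y => M * (y^2)⁻¹)
      (by
        intro x hx
        rw [Set.uIcc_of_le hδR] at hx
        have hx0 : x ≠ 0 := by have := hx.1; linarith
        have := ((hasDerivAt_inv hx0).const_mul M).fun_neg
        exact this.congr_deriv (by ring))
      (by apply ContinuousOn.intervalIntegrable; rw [Set.uIcc_of_le hδR]; exact cI)
    rw [ev]
    have : 0 ≤ M * R⁻¹ := by positivity
    rw [div_eq_mul_inv]; linarith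
  have bb := bP R ⟨hδR, le_rfl⟩
  have ba := bP δ ⟨le_rfl, hδR⟩
  rw [le_div_iff₀ (by positivity)]
  have : Y * ‖∫ y in δ..R, (b y : ℂ) * e (Y * ψ y)‖ ≤ 2 * (B / (k * δ)) + M / δ := by linarith
  calc ‖∫ y in δ..R, (b y : ℂ) * e (Y * ψ y)‖ * (Y * δ) 
      = (Y * ‖∫ y in δ..R, (b y : ℂ) * e (Y * ψ y)‖) * δ := by ring
    _ ≤ (2 * (B / (k * δ)) + M / δ) * δ := by gcongr
    _ = _ := by simp only [M]; field_simp; ring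

lemma sd {ψ ψ1 ψ2 : ℝ → ℝ} {R k K : ℝ} (hk : 0 < k) (hK : 0 ≤ K) (hR : 0 < R)
    (h1 : ∀ x, HasDerivAt ψ (ψ1 x) x) (h2 : ∀ x, HasDerivAt ψ1 (ψ2 x) x) (c2 : Continuous ψ2)
    (hψ1 : ∀ y ∈ Set.Icc (-R) R, k * |y| ≤ |ψ1 y|) (hψ2 : ∀ y ∈ Set.Icc (-R) R, |ψ2 y| ≤ K) :
    ∃ C : ℝ, 0 < C ∧ ∀ b b1 : ℝ → ℝ, ∀ B Y : ℝ, 0 ≤ B → 0 < Y →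
    (∀ x, HasDerivAt b (b1 x) x) → Continuous b1 →
    (∀ y ∈ Set.Icc (-R) R, |b y| ≤ B) → (∀ y ∈ Set.Icc (-R) R, |b1 y| ≤ B) →
    ‖∫ y in (-R)..R, (b y : ℂ) * e (Y * ψ y)‖ ≤ C * B / √Y := by
  refine ⟨2 + 2 * (2 / k + R / k + K / k ^ 2), by positivity, ?_⟩
  intro b b1 B Y hB hY hb cb hbB hb1
  have cb0 : Continuous b := continuous_iff_continuousAt.2 fun x => (hb x).continuousAt
  have c0 : Continuous ψ := continuous_iff_continuousAt.2 fun x => (h1 x).continuousAt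
  have cf : Continuous (fun y => (b y : ℂ) * e (Y * ψ y)) := by fun_prop
  have nb : ∀ y ∈ Set.Icc (-R) R, ‖(b y : ℂ) * e (Y * ψ y)‖ ≤ B := by
    intro y hy
    rw [norm_mul, norm_e, mul_one, Complex.norm_real]; exact hbB y hy
  have hs : 0 < √Y := Real.sqrt_pos.2 hY
  set δ := 1 / √Y with hδ
  have hδ0 : 0 < δ := by positivity
  have triv : ∀ r, 0 ≤ r → r ≤ R → ‖∫ y in (-r)..r, (b y : ℂ) * e (Y * ψ y)‖ ≤ 2 * r * B := by
    intro r hr hrR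
    have := intervalIntegral.norm_integral_le_of_norm_le_const (a := -r) (b := r)
      (f := fun y => (b y : ℂ) * e (Y * ψ y)) (C := B) (by
        intro x hx
        rw [Set.uIoc_of_le (by linarith)] at hx
        exact nb x ⟨by linarith [hx.1], by linarith [hx.2]⟩)
    rw [abs_of_nonneg (by linarith)] at this
    linarith
  have e3 : (2 + 2 * (2 / k + R / k + K / k ^ 2)) * B / √Y =
      2 * δ * B + 2 * ((2 / k + R / k + K / k ^ 2) * B * δ) := by rw [hδ]; ring
  rw [e3]
  have pos : 0 ≤ (2 / k + R / k + K / k ^ 2) * B * δ := by positivity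
  rcases le_total R δ with h | h
  · have := triv R hR.le le_rfl
    have : 2 * R * B ≤ 2 * δ * B := by gcongr
    linarith
  have e4 : ∀ x : ℝ, x / (Y * δ) = x * δ := by
    intro x
    rw [hδ]
    have : Y = √Y * √Y := (Real.mul_self_sqrt hY.le).symm
    nth_rewrite 1 [this]
    field_simp
  have p1 := sd_half (ψ := ψ) (b := b) hk hK hB hY hδ0 h h1 h2 c2 hb cb
    (fun y hy => by
      have := hψ1 y ⟨by linarith [hy.1], hy.2⟩
      rwa [abs_of_pos (by linarith [hy.1])] at this)
    (fun y hy => hψ2 y ⟨by linarith [hy.1], hy.2⟩)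
    (fun y hy => hbB y ⟨by linarith [hy.1], hy.2⟩)
    (fun y hy => hb1 y ⟨by linarith [hy.1], hy.2⟩)
  have dn : ∀ (f f' : ℝ → ℝ), (∀ x, HasDerivAt f (f' x) x) →
      ∀ x, HasDerivAt (fun y => f (-y)) (-f' (-x)) x := by
    intro f f' hf x
    have := (hf (-x)).scomp x (hasDerivAt_neg x)
    simpa [Function.comp_def] using this
  have p2 := sd_half (ψ := fun y => ψ (-y)) (ψ1 := fun y => -ψ1 (-y)) (ψ2 := fun y => ψ2 (-y))
    (b := fun y => b (-y)) (b1 := fun y => - b1 (-y)) hk hK hB hY hδ0 h (dn _ _ h1)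
    (fun x => by simpa using (dn _ _ h2 x).fun_neg) (by fun_prop) (dn _ _ hb) (by fun_prop)
    (fun y hy => by
      have := hψ1 (-y) ⟨by linarith [hy.2], by linarith [hy.1]⟩
      rw [abs_neg]
      rwa [abs_neg, abs_of_pos (by linarith [hy.1])] at this)
    (fun y hy => hψ2 (-y) ⟨by linarith [hy.2], by linarith [hy.1]⟩)
    (fun y hy => hbB (-y) ⟨by linarith [hy.2], by linarith [hy.1]⟩)
    (fun y hy => by rw [abs_neg]; exact hb1 (-y) ⟨by linarith [hy.2], by linarith [hy.1]⟩)
  rw [intervalIntegral.integral_comp_neg (fun y => (b y : ℂ) * e (Y * ψ y))] at p2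
  have p3 := triv δ hδ0.le h
  rw [e4] at p1 p2
  rw [← intervalIntegral.integral_add_adjacent_intervals (b := -δ)
    (cf.intervalIntegrable _ _) (cf.intervalIntegrable _ _),
    ← intervalIntegral.integral_add_adjacent_intervals (a := -δ) (b := δ)
    (cf.intervalIntegrable _ _) (cf.intervalIntegrable _ _)]
  refine (norm_add_le _ _).trans ?_
  have := norm_add_le (∫ y in (-δ)..δ, (b y : ℂ) * e (Y * ψ y)) (∫ y in δ..R, (b y : ℂ) * e (Y * ψ y))
  linarith


/-- one integration by parts -/
lemma ns1 {g g1 g2 b b1 : ℝ → ℝ} {M Λ : ℝ} (hM : 0 < M) (hΛ : 0 < Λ)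
    (h1 : ∀ x, HasDerivAt g (g1 x) x) (h2 : ∀ x, HasDerivAt g1 (g2 x) x) (c2 : Continuous g2)
    (hb : ∀ x ∈ Set.Icc (-M) M, HasDerivAt b (b1 x) x) (cb : ContinuousOn b1 (Set.Icc (-M) M))
    (ne : ∀ x ∈ Set.Icc (-M) M, g1 x ≠ 0) (hbM : b M = 0) (hbM' : b (-M) = 0) :
    ‖∫ x in (-M)..M, (b x : ℂ) * e (Λ * g x)‖ ≤ 1 / Λ *
      ‖∫ x in (-M)..M, ((b1 x * (g1 x)⁻¹ + b x * (-g2 x / (g1 x) ^ 2) : ℝ) : ℂ) * e (Λ * g x)‖ := by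
  have hMM : -M ≤ M := by linarith
  have c1 : Continuous g1 := continuous_iff_continuousAt.2 fun x => (h2 x).continuousAt
  have cb0 : ContinuousOn b (Set.Icc (-M) M) := fun x hx => (hb x hx).continuousAt.continuousWithinAt
  have key := ibp_bound (P := fun x => b x * (g1 x)⁻¹)
    (P' := fun x => b1 x * (g1 x)⁻¹ + b x * (-g2 x / (g1 x) ^ 2))
    (G := fun y => Λ * g y) (G' := fun y => Λ * g1 y) hMM
    (fun x hx => (hb x hx).mul ((h2 x).inv (ne x hx))) (fun x _ => (h1 x).const_mul Λ)
    (by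
      apply ContinuousOn.add
      · exact cb.mul (c1.continuousOn.inv₀ ne)
      · apply cb0.mul
        exact c2.neg.continuousOn.div (by fun_prop) fun x hx => pow_ne_zero _ (ne x hx)) (by fun_prop)
  have e1 : ∫ y in (-M)..M, ((b y * (g1 y)⁻¹ * (Λ * g1 y) : ℝ) : ℂ) * e (Λ * g y) =
      Λ * ∫ y in (-M)..M, (b y : ℂ) * e (Λ * g y) := by
    rw [← intervalIntegral.integral_const_mul]
    refine intervalIntegral.integral_congr fun x hx => ?_
    rw [Set.uIcc_of_le hMM] at hx
    have : b x * (g1 x)⁻¹ * (Λ * g1 x) = Λ * b x := by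
      field_simp [ne x hx]
    simp only [this]; push_cast; ring
  rw [e1, norm_mul, Complex.norm_real, Real.norm_of_nonneg hΛ.le] at key
  simp only [hbM, hbM', zero_mul, abs_zero, zero_add] at key
  rw [div_mul_eq_mul_div, one_mul, le_div_iff₀ hΛ, mul_comm]
  simpa using key

lemma ns2 {V V1 V2 g g1 g2 g3 : ℝ → ℝ} {M Λ c1 G B : ℝ} (hM : 0 < M) (hΛ : 0 < Λ)
    (hc1 : 0 < c1) (hG : 0 ≤ G) (hB : 0 ≤ B)
    (h1 : ∀ x, HasDerivAt g (g1 x) x) (h2 : ∀ x, HasDerivAt g1 (g2 x) x)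
    (h3 : ∀ x, HasDerivAt g2 (g3 x) x) (c3 : Continuous g3)
    (v1 : ∀ x, HasDerivAt V (V1 x) x) (v2 : ∀ x, HasDerivAt V1 (V2 x) x) (cV : Continuous V2)
    (lb : ∀ x ∈ Set.Icc (-M) M, c1 ≤ |g1 x|)
    (b2 : ∀ x ∈ Set.Icc (-M) M, |g2 x| ≤ G) (b3 : ∀ x ∈ Set.Icc (-M) M, |g3 x| ≤ G)
    (B0 : ∀ x, |V x| ≤ B) (B1 : ∀ x, |V1 x| ≤ B) (B2 : ∀ x, |V2 x| ≤ B)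
    (hVM : V M = 0) (hVM' : V (-M) = 0) (hV1M : V1 M = 0) (hV1M' : V1 (-M) = 0) :
    ‖∫ x in (-M)..M, (V x : ℂ) * e (Λ * g x)‖ ≤
      (2 * M * B * (1 / c1 + 2 * (G / c1 ^ 2) + (G / c1 ^ 2 + 2 * G ^ 2 / c1 ^ 3)) * (1 / c1) +
       2 * M * B * (1 / c1 + G / c1 ^ 2) * (G / c1 ^ 2)) / Λ ^ 2 := by
  have hMM : -M ≤ M := by linarith
  have ne : ∀ x ∈ Set.Icc (-M) M, g1 x ≠ 0 := by
    intro x hx h0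
    have := lb x hx
    rw [h0, abs_zero] at this; linarith
  have cg2 : Continuous g2 := continuous_iff_continuousAt.2 fun x => (h3 x).continuousAt
  have cg1 : Continuous g1 := continuous_iff_continuousAt.2 fun x => (h2 x).continuousAt
  have cV1 : Continuous V1 := continuous_iff_continuousAt.2 fun x => (v2 x).continuousAt
  have cV0 : Continuous V := continuous_iff_continuousAt.2 fun x => (v1 x).continuousAt
  have a1 := ns1 hM hΛ h1 h2 cg2 (fun x _ => v1 x) cV1.continuousOn ne hVM hVM'
  set b : ℝ → ℝ := fun x => V1 x * (g1 x)⁻¹ + V x * (-g2 x / (g1 x) ^ 2) with hb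
  set b1 : ℝ → ℝ := fun x => (V2 x * (g1 x)⁻¹ + V1 x * (-g2 x / (g1 x) ^ 2)) +
    (V1 x * (-g2 x / (g1 x) ^ 2) + V x * ((-g3 x * g1 x ^ 2 - -g2 x * (2 * g1 x * g2 x)) / (g1 x ^ 2) ^ 2))
    with hb1
  have d : ∀ x ∈ Set.Icc (-M) M, HasDerivAt b (b1 x) x := by
    intro x hx
    have := ne x hx
    refine HasDerivAt.add ((v2 x).mul ((h2 x).inv (ne x hx))) ((v1 x).mul ?_)
    have q := ((h2 x).fun_pow 2)
    have := (h3 x).fun_neg.div q (pow_ne_zero _ (ne x hx))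
    exact this.congr_deriv (by simp)
  have cb1 : ContinuousOn b1 (Set.Icc (-M) M) := by
    have i1 : ContinuousOn (fun x => (g1 x)⁻¹) (Set.Icc (-M) M) := cg1.continuousOn.inv₀ ne
    have i2 : ContinuousOn (fun x => -g2 x / (g1 x) ^ 2) (Set.Icc (-M) M) :=
      cg2.neg.continuousOn.div (by fun_prop) fun x hx => pow_ne_zero _ (ne x hx)
    have i3 : ContinuousOn (fun x => (-g3 x * g1 x ^ 2 - -g2 x * (2 * g1 x * g2 x)) / (g1 x ^ 2) ^ 2)
      (Set.Icc (-M) M) :=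
      ContinuousOn.div (by fun_prop) (by fun_prop)
        fun x hx => pow_ne_zero _ (pow_ne_zero _ (ne x hx))
    exact ((cV.continuousOn.mul i1).add (cV1.continuousOn.mul i2)).add
      ((cV1.continuousOn.mul i2).add (cV0.continuousOn.mul i3))
  have a2 := ns1 (b := b) hM hΛ h1 h2 cg2 d cb1 ne (by simp [hb, hVM, hV1M]) (by simp [hb, hVM', hV1M'])
  have r0 : ∀ x ∈ Set.Icc (-M) M, |(g1 x)⁻¹| ≤ 1 / c1 := by
    intro x hx
    rw [abs_inv, ← one_div]
    exact one_div_le_one_div_of_le hc1 (lb x hx)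
  have r1 : ∀ x ∈ Set.Icc (-M) M, |-g2 x / (g1 x) ^ 2| ≤ G / c1 ^ 2 := by
    intro x hx
    rw [abs_div, abs_neg, abs_pow]
    have := lb x hx
    exact div_le_div₀ hG (b2 x hx) (by positivity) (by gcongr)
  have r2 : ∀ x ∈ Set.Icc (-M) M,
      |(-g3 x * g1 x ^ 2 - -g2 x * (2 * g1 x * g2 x)) / (g1 x ^ 2) ^ 2| ≤
        G / c1 ^ 2 + 2 * G ^ 2 / c1 ^ 3 := by
    intro x hx
    have hne := ne x hx
    have hl := lb x hx
    have : (-g3 x * g1 x ^ 2 - -g2 x * (2 * g1 x * g2 x)) / (g1 x ^ 2) ^ 2 =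
      -(g3 x / g1 x ^ 2) + 2 * (g2 x) ^ 2 / g1 x ^ 3 := by field_simp; ring
    rw [this]
    refine (abs_add_le _ _).trans ?_
    rw [abs_neg, abs_div, abs_div, abs_mul, abs_pow, abs_pow, abs_pow, abs_two]
    have := b2 x hx
    apply add_le_add
    · exact div_le_div₀ hG (b3 x hx) (by positivity) (by gcongr)
    · exact div_le_div₀ (by positivity) (by gcongr) (by positivity) (by gcongr)
  set ρ0 := 1 / c1
  set ρ1 := G / c1 ^ 2
  set ρ2 := G / c1 ^ 2 + 2 * G ^ 2 / c1 ^ 3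
  have p0 : 0 ≤ ρ0 := by positivity
  have p1 : 0 ≤ ρ1 := by positivity
  have p2 : 0 ≤ ρ2 := by positivity
  have hbb : ∀ x ∈ Set.Icc (-M) M, |b x| ≤ B * (ρ0 + ρ1) := by
    intro x hx
    refine (abs_add_le _ _).trans ?_
    rw [abs_mul, abs_mul, mul_add]
    exact add_le_add (mul_le_mul (B1 x) (r0 x hx) (abs_nonneg _) hB)
      (mul_le_mul (B0 x) (r1 x hx) (abs_nonneg _) hB)
  have hbb1 : ∀ x ∈ Set.Icc (-M) M, |b1 x| ≤ B * (ρ0 + 2 * ρ1 + ρ2) := by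
    intro x hx
    refine (abs_add_le _ _).trans ?_
    have t1 := abs_add_le (V2 x * (g1 x)⁻¹) (V1 x * (-g2 x / (g1 x) ^ 2))
    have t2 := abs_add_le (V1 x * (-g2 x / (g1 x) ^ 2))
      (V x * ((-g3 x * g1 x ^ 2 - -g2 x * (2 * g1 x * g2 x)) / (g1 x ^ 2) ^ 2))
    rw [abs_mul, abs_mul] at t1 t2
    have s1 := mul_le_mul (B2 x) (r0 x hx) (abs_nonneg _) hB
    have s2 := mul_le_mul (B1 x) (r1 x hx) (abs_nonneg _) hB
    have s3 := mul_le_mul (B0 x) (r2 x hx) (abs_nonneg _) hB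
    linarith
  have fin : ‖∫ x in (-M)..M, ((b1 x * (g1 x)⁻¹ + b x * (-g2 x / (g1 x) ^ 2) : ℝ) : ℂ) * e (Λ * g x)‖
      ≤ (B * (ρ0 + 2 * ρ1 + ρ2) * ρ0 + B * (ρ0 + ρ1) * ρ1) * |M - -M| := by
    apply intervalIntegral.norm_integral_le_of_norm_le_const
    intro x hx
    rw [Set.uIoc_of_le hMM] at hx
    have hx' : x ∈ Set.Icc (-M) M := ⟨hx.1.le, hx.2⟩
    rw [norm_mul, norm_e, mul_one, Complex.norm_real]
    refine (norm_add_le _ _).trans ?_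
    rw [norm_mul, norm_mul]
    exact add_le_add (mul_le_mul (hbb1 x hx') (r0 x hx') (abs_nonneg _) (by positivity))
      (mul_le_mul (hbb x hx') (r1 x hx') (abs_nonneg _) (by positivity))
  rw [abs_of_pos (by linarith)] at fin
  have hl : 0 ≤ 1 / Λ := by positivity
  calc _ ≤ 1 / Λ * (1 / Λ * ((B * (ρ0 + 2 * ρ1 + ρ2) * ρ0 + B * (ρ0 + ρ1) * ρ1) * (M - -M))) := by
        refine a1.trans ?_
        refine mul_le_mul_of_nonneg_left (a2.trans ?_) hl
        exact mul_le_mul_of_nonneg_left fin hl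
    _ = _ := by field_simp; ring

set_option maxHeartbeats 1000000 in
lemma nsbound {c M : ℝ} (hc : 1 < c) (hM : 0 < M) {V V1 V2 : ℝ → ℝ} {B : ℝ} (hB : 0 ≤ B)
    (v1 : ∀ x, HasDerivAt V (V1 x) x) (v2 : ∀ x, HasDerivAt V1 (V2 x) x) (cV : Continuous V2)
    (B0 : ∀ x, |V x| ≤ B) (B1 : ∀ x, |V1 x| ≤ B) (B2 : ∀ x, |V2 x| ≤ B)
    (hVM : V M = 0) (hVM' : V (-M) = 0) (hV1M : V1 M = 0) (hV1M' : V1 (-M) = 0) :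
    ∃ K > 0, ∀ t > 0, ∀ y : ℝ, (y ≤ c * Real.exp (-((c - 1) * M)) / 2 * t ∨
        2 * c * Real.exp ((c - 1) * M) * t ≤ y) →
      ‖∫ x in (-M)..M, (V x : ℂ) * e (t * Real.exp (c * x) - y * Real.exp x)‖ ≤ K / (t + |y|) ^ 2 := by
  set E1 := Real.exp (-((c - 1) * M)) with hE1
  set E2 := Real.exp ((c - 1) * M) with hE2
  have pE1 : 0 < E1 := Real.exp_pos _
  have pE2 : 0 < E2 := Real.exp_pos _
  have pM : 0 < Real.exp (-M) := Real.exp_pos _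
  set d := min (c * E1 / 2) 1 / (1 + c * E1 / 2) with hd
  set d' := (c * E2) / (1 + 2 * c * E2) with hd'
  have hc0 : 0 < c := by linarith
  have pd : 0 < d := by positivity
  have pd' : 0 < d' := by positivity
  set c1 := Real.exp (-M) * min d d' with hc1
  have pc1 : 0 < c1 := by positivity
  set G := c ^ 3 * Real.exp (c * M) + Real.exp M with hG
  have pG : 0 ≤ G := by positivity
  refine ⟨(2 * M * B * (1 / c1 + 2 * (G / c1 ^ 2) + (G / c1 ^ 2 + 2 * G ^ 2 / c1 ^ 3)) * (1 / c1) +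
       2 * M * B * (1 / c1 + G / c1 ^ 2) * (G / c1 ^ 2)) + 1, by positivity, fun t ht y hy => ?_⟩
  have hΛ : 0 < t + |y| := by positivity
  set Λ := t + |y| with hΛd
  set α := t / Λ with hα
  set β := y / Λ with hβ
  have pα : 0 < α := by positivity
  have hsum : α + |β| = 1 := by
    rw [hα, hβ, abs_div, abs_of_pos hΛ, ← add_div, div_self hΛ.ne']
  have hβ1 : |β| ≤ 1 := by linarith
  have hα1 : α ≤ 1 := by linarith [abs_nonneg β]
  have hy' : (β ≤ c * E1 / 2 * α ∨ 2 * c * E2 * α ≤ β) := by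
    rcases hy with h | h
    · left; rw [hα, hβ, ← mul_div_assoc]; gcongr
    · right; rw [hα, hβ, ← mul_div_assoc]; gcongr
  have lb0 : ∀ x ∈ Set.Icc (-M) M, min d d' ≤ |c * α * Real.exp ((c - 1) * x) - β| := by
    intro x hx
    have u1 : E1 ≤ Real.exp ((c - 1) * x) := by
      apply Real.exp_le_exp.2; nlinarith [hx.1]
    have u2 : Real.exp ((c - 1) * x) ≤ E2 := by
      apply Real.exp_le_exp.2; nlinarith [hx.2]
    rcases hy' with h | h
    · refine (min_le_left _ _).trans (le_trans ?_ (le_abs_self _))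
      have w1 : c * α * E1 ≤ c * α * Real.exp ((c - 1) * x) := by gcongr
      rw [hd, div_le_iff₀ (by positivity)]
      rcases le_total β 0 with hb | hb
      · rw [abs_of_nonpos hb] at hsum
        have m1 := min_le_left (c * E1 / 2) 1
        have m2 := min_le_right (c * E1 / 2) 1
        have m0 : 0 < min (c * E1 / 2) 1 := by positivity
        have z1 : min (c * E1 / 2) 1 ≤ c * α * E1 - β := by
          have : min (c * E1 / 2) 1 = min (c * E1 / 2) 1 * α + min (c * E1 / 2) 1 * (-β) := by
            rw [← mul_add, hsum, mul_one]
          nlinarith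
        have : 0 < c * E1 / 2 := by positivity
        nlinarith
      · rw [abs_of_nonneg hb] at hsum
        have m1 := min_le_left (c * E1 / 2) 1
        have : 0 < c * E1 / 2 := by positivity
        have z : 1 ≤ α * (1 + c * E1 / 2) := by linarith
        have z1 : c * E1 / 2 * α ≤ c * α * Real.exp ((c - 1) * x) - β := by linarith
        calc _ ≤ c * E1 / 2 := m1
          _ ≤ c * E1 / 2 * (α * (1 + c * E1 / 2)) := le_mul_of_one_le_right this.le z
          _ = (c * E1 / 2 * α) * (1 + c * E1 / 2) := by ring
          _ ≤ _ := by gcongr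
    · refine (min_le_right _ _).trans (le_trans ?_ (neg_le_abs _))
      have w1 : c * α * Real.exp ((c - 1) * x) ≤ c * α * E2 := by gcongr
      have hb : 0 ≤ β := le_trans (by positivity) h
      rw [abs_of_nonneg hb] at hsum
      rw [hd', div_le_iff₀ (by positivity)]
      have : 0 < c * E2 := by positivity
      have z : 2 * c * E2 ≤ β * (1 + 2 * c * E2) := by nlinarith
      have z1 : β / 2 ≤ -(c * α * Real.exp ((c - 1) * x) - β) := by linarith
      calc c * E2 ≤ (β / 2) * (1 + 2 * c * E2) := by linarith
        _ ≤ _ := by gcongr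
  have dexp : ∀ k x : ℝ, HasDerivAt (fun x => Real.exp (k * x)) (Real.exp (k * x) * k) x := by
    intro k x
    simpa using ((hasDerivAt_id x).const_mul k).exp
  have dg : ∀ k x : ℝ, HasDerivAt (fun x => k * Real.exp (c * x) - β * Real.exp x)
      (c * k * Real.exp (c * x) - β * Real.exp x) x := by
    intro k x
    have := ((dexp c x).const_mul k).sub ((Real.hasDerivAt_exp x).const_mul β)
    exact this.congr_deriv (by ring)
  have bd : ∀ k, 0 ≤ k → k ≤ c ^ 3 → ∀ x ∈ Set.Icc (-M) M,
      |k * Real.exp (c * x) - β * Real.exp x| ≤ G := by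
    intro k hk0 hk x hx
    refine (abs_sub _ _).trans ?_
    rw [abs_mul, abs_mul, Real.abs_exp, Real.abs_exp, abs_of_nonneg hk0]
    have : Real.exp (c * x) ≤ Real.exp (c * M) := Real.exp_le_exp.2 (by nlinarith [hx.2])
    have : Real.exp x ≤ Real.exp M := Real.exp_le_exp.2 hx.2
    rw [hG]
    have : |β| * Real.exp x ≤ 1 * Real.exp M := by gcongr
    have : k * Real.exp (c * x) ≤ c ^ 3 * Real.exp (c * M) := by gcongr
    linarith
  have main := ns2 (V := V) (V1 := V1) (V2 := V2) (g := fun x => α * Real.exp (c * x) - β * Real.exp x)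
    (g1 := fun x => c * α * Real.exp (c * x) - β * Real.exp x)
    (g2 := fun x => c * (c * α) * Real.exp (c * x) - β * Real.exp x)
    (g3 := fun x => c * (c * (c * α)) * Real.exp (c * x) - β * Real.exp x)
    hM hΛ pc1 pG hB (dg _) (dg _) (dg _) (by fun_prop) v1 v2 cV
    (by
      intro x hx
      have e1 : c * α * Real.exp (c * x) - β * Real.exp x =
        Real.exp x * (c * α * Real.exp ((c - 1) * x) - β) := by
        have : Real.exp (c * x) = Real.exp x * Real.exp ((c - 1) * x) := by
          rw [← Real.exp_add]; congr 1; ring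
        rw [this]; ring
      rw [e1, abs_mul, Real.abs_exp]
      exact mul_le_mul (Real.exp_le_exp.2 hx.1) (lb0 x hx) (by positivity) (Real.exp_pos _).le)
    (bd _ (by positivity) (by
      have : c ^ 2 ≤ c ^ 3 := pow_le_pow_right₀ hc.le (by norm_num)
      nlinarith [sq_nonneg c])) (bd _ (by positivity) (by
      have : 0 < c ^ 3 := by positivity
      nlinarith)) B0 B1 B2 hVM hVM' hV1M hV1M'
  have e2 : ∀ x, Λ * (α * Real.exp (c * x) - β * Real.exp x) = t * Real.exp (c * x) - y * Real.exp x := by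
    intro x
    rw [hα, hβ]; field_simp
  simp only [e2] at main
  refine main.trans ?_
  exact div_le_div_of_nonneg_right (le_add_of_nonneg_right zero_le_one) (by positivity)


lemma hasDerivAt_param {F F' : ℝ → ℝ → ℂ} (hF : Continuous (Function.uncurry F))
    (hF' : Continuous (Function.uncurry F')) (hd : ∀ x y, HasDerivAt (fun x => F x y) (F' x y) x)
    (a b x₀ : ℝ) : HasDerivAt (fun x => ∫ y in a..b, F x y) (∫ y in a..b, F' x₀ y) x₀ := by
  obtain ⟨C, hC⟩ := (IsCompact.exists_bound_of_continuousOn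
    ((isCompact_closedBall x₀ (1:ℝ)).prod (isCompact_uIcc (a := a) (b := b))) hF'.continuousOn)
  have := intervalIntegral.hasDerivAt_integral_of_dominated_loc_of_deriv_le (μ := volume)
    (F := F) (F' := F') (x₀ := x₀) (s := Metric.ball x₀ 1) (a := a) (b := b) (bound := fun _ => C)
    (Metric.ball_mem_nhds x₀ one_pos)
    (Filter.Eventually.of_forall fun x => by
      have : Continuous (F x) := by
        exact hF.comp (Continuous.prodMk_right x)
      exact this.aestronglyMeasurable)
    ((hF.comp (Continuous.prodMk_right x₀)).intervalIntegrable _ _)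
    ((hF'.comp (Continuous.prodMk_right x₀)).aestronglyMeasurable)
    (Filter.Eventually.of_forall fun y hy x hx => hC (x, y)
      ⟨Metric.ball_subset_closedBall hx, Set.uIoc_subset_uIcc hy⟩)
    (by simp)
    (Filter.Eventually.of_forall fun y hy x hx => hd x y)
  exact this.2

lemma analytic_dslope {f : ℝ → ℝ} (hf : ∀ x, AnalyticAt ℝ f x) : ∀ x, AnalyticAt ℝ (dslope f 0) x := by
  intro x
  by_cases hx : x = 0
  · subst hx
    obtain ⟨p, hp⟩ := hf 0
    exact ⟨_, hp.has_fpower_series_dslope_fslope⟩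
  · have h1 : AnalyticAt ℝ (fun y => (f y - f 0) / (y - 0)) x := by
      apply AnalyticAt.div ((hf x).sub analyticAt_const) (analyticAt_id.sub analyticAt_const)
      simpa using hx
    refine h1.congr ?_
    filter_upwards [isOpen_ne.mem_nhds hx] with y hy
    rw [dslope_of_ne _ hy, slope_def_field]

lemma exists_q {c : ℝ} (hc : 1 < c) : ∃ q q1 q2 : ℝ → ℝ, (∀ x, HasDerivAt q (q1 x) x) ∧
    (∀ x, HasDerivAt q1 (q2 x) x) ∧ Continuous q2 ∧
    ∀ y, Real.exp (c * y) - c * Real.exp y + (c - 1) = q y * (c * Real.exp (c * y) - c * Real.exp y) := by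
  set ψ : ℝ → ℝ := fun y => Real.exp (c * y) - c * Real.exp y + (c - 1) with hψ
  set ψ1 : ℝ → ℝ := fun y => c * Real.exp (c * y) - c * Real.exp y with hψ1
  have hexp : ∀ k x : ℝ, AnalyticAt ℝ (fun y => Real.exp (k * y)) x := by
    intro k x
    exact (analyticAt_const.mul analyticAt_id).rexp
  have hexp1 : ∀ x : ℝ, AnalyticAt ℝ (fun y => Real.exp y) x := by
    intro x; simpa using hexp 1 x
  have aψ : ∀ x, AnalyticAt ℝ ψ x := fun x =>
    ((hexp c x).sub (analyticAt_const.mul (hexp1 x))).add analyticAt_const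
  have aψ1 : ∀ x, AnalyticAt ℝ ψ1 x := fun x =>
    (analyticAt_const.mul (hexp c x)).sub (analyticAt_const.mul (hexp1 x))
  have dexp : ∀ k x : ℝ, HasDerivAt (fun x => Real.exp (k * x)) (Real.exp (k * x) * k) x := by
    intro k x
    simpa using ((hasDerivAt_id x).const_mul k).exp
  have d1 : ∀ x, HasDerivAt ψ (ψ1 x) x := by
    intro x
    exact (((dexp c x).sub ((Real.hasDerivAt_exp x).const_mul c)).add_const (c - 1)).congr_deriv (by
      simp only [hψ1]; ring)
  have d2 : HasDerivAt ψ1 (c * (c - 1)) 0 := by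
    exact (((dexp c 0).const_mul c).sub ((Real.hasDerivAt_exp 0).const_mul c)).congr_deriv (by
      simp; ring)
  have z0 : ψ 0 = 0 := by simp [hψ]
  have z1 : ψ1 0 = 0 := by simp [hψ1]
  have a1 := analytic_dslope aψ
  have a2 := analytic_dslope a1
  have a3 := analytic_dslope aψ1
  have m1 : ∀ y, ψ y = y * dslope ψ 0 y := by
    intro y
    have := sub_smul_dslope ψ 0 y
    simp only [sub_zero, smul_eq_mul, z0] at this
    exact this.symm
  have w0 : dslope ψ 0 0 = 0 := by rw [dslope_same, (d1 0).deriv, z1]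
  have m2 : ∀ y, dslope ψ 0 y = y * dslope (dslope ψ 0) 0 y := by
    intro y
    have := sub_smul_dslope (dslope ψ 0) 0 y
    simp only [sub_zero, smul_eq_mul, w0] at this
    exact this.symm
  have m3 : ∀ y, ψ1 y = y * dslope ψ1 0 y := by
    intro y
    have := sub_smul_dslope ψ1 0 y
    simp only [sub_zero, smul_eq_mul, z1] at this
    exact this.symm
  have ne : ∀ y, dslope ψ1 0 y ≠ 0 := by
    intro y
    by_cases hy : y = 0
    · rw [hy, dslope_same, d2.deriv]
      have : 0 < c * (c - 1) := by apply mul_pos <;> linarith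
      exact this.ne'
    · intro h
      have := m3 y
      rw [h, mul_zero] at this
      simp only [hψ1] at this
      have h2 : Real.exp (c * y) = Real.exp y := by
        have : c * (Real.exp (c * y) - Real.exp y) = 0 := by linarith
        rcases mul_eq_zero.1 this with h | h <;> linarith
      have h3 := Real.exp_injective h2
      have : (c - 1) * y = 0 := by linarith
      rcases mul_eq_zero.1 this with h | h
      · linarith
      · exact hy h
  set q : ℝ → ℝ := fun y => y * dslope (dslope ψ 0) 0 y / dslope ψ1 0 y with hq
  have aq : ∀ x, AnalyticAt ℝ q x := fun x => (analyticAt_id.mul (a2 x)).div (a3 x) (ne x)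
  have cq : ContDiff ℝ 2 q := contDiff_iff_contDiffAt.2 fun x => (aq x).contDiffAt
  have cq1 : ContDiff ℝ 1 (deriv q) := by
    have : ContDiff ℝ (1 + 1) q := by simpa [one_add_one_eq_two] using cq
    exact (contDiff_succ_iff_deriv.1 this).2.2
  refine ⟨q, deriv q, deriv (deriv q), ?_, ?_, ?_, ?_⟩
  · intro x; exact ((cq.differentiable (by norm_num)) x).hasDerivAt
  · intro x; exact ((cq1.differentiable (by norm_num)) x).hasDerivAt
  · exact cq1.continuous_deriv le_rfl
  · intro y
    change ψ y = q y * ψ1 y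
    rw [m1, m2, m3 y, hq]
    have := ne y
    field_simp


noncomputable def psi (c y : ℝ) : ℝ := Real.exp (c * y) - c * Real.exp y + (c - 1)
noncomputable def psi1 (c y : ℝ) : ℝ := c * Real.exp (c * y) - c * Real.exp y
noncomputable def psi2 (c y : ℝ) : ℝ := c * (Real.exp (c * y) * c) - c * Real.exp y

lemma hasDerivAt_expmul (k x : ℝ) : HasDerivAt (fun x => Real.exp (k * x)) (Real.exp (k * x) * k) x := by
  simpa using ((hasDerivAt_id x).const_mul k).exp

lemma psi_d1 (c x : ℝ) : HasDerivAt (psi c) (psi1 c x) x :=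
  (((hasDerivAt_expmul c x).sub ((Real.hasDerivAt_exp x).const_mul c)).add_const (c - 1)).congr_deriv (by
      simp only [psi1]; ring)

lemma psi_d2 (c x : ℝ) : HasDerivAt (psi1 c) (psi2 c x) x :=
  (((hasDerivAt_expmul c x).const_mul c).sub ((Real.hasDerivAt_exp x).const_mul c)).congr_deriv (by
      simp only [psi2])

lemma psi_cont (c : ℝ) : Continuous (psi c) := by unfold psi; fun_prop
lemma psi2_cont (c : ℝ) : Continuous (psi2 c) := by unfold psi2; fun_prop
lemma psi1_cont (c : ℝ) : Continuous (psi1 c) := by unfold psi1; fun_prop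

lemma psi1_lb {c N : ℝ} (hc : 1 < c) : ∃ k > 0, ∀ y ∈ Set.Icc (-N) N, k * |y| ≤ |psi1 c y| := by
  refine ⟨c * Real.exp (-N) * ((c - 1) * Real.exp (-((c - 1) * N))), ?_, ?_⟩
  · have : 0 < c - 1 := by linarith
    positivity
  intro y hy
  have e1 : psi1 c y = c * Real.exp y * (Real.exp ((c - 1) * y) - 1) := by
    have : Real.exp (c * y) = Real.exp y * Real.exp ((c - 1) * y) := by
      rw [← Real.exp_add]; congr 1; ring
    rw [psi1, this]; ring
  have hc0 : 0 < c - 1 := by linarith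
  have e2 : (c - 1) * Real.exp (-((c - 1) * N)) * |y| ≤ |Real.exp ((c - 1) * y) - 1| := by
    rcases le_total 0 y with h | h
    · have h1 : 0 ≤ (c - 1) * y := by positivity
      have h2 := Real.add_one_le_exp ((c - 1) * y)
      rw [abs_of_nonneg h, abs_of_nonneg (by linarith)]
      have h3 : Real.exp (-((c - 1) * N)) ≤ 1 := by
        apply Real.exp_le_one_iff.2
        nlinarith [hy.1, hy.2]
      nlinarith
    · have h2 := Real.add_one_le_exp (-((c - 1) * y))
      have h4 : Real.exp (-((c - 1) * y)) * Real.exp ((c - 1) * y) = 1 := by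
        rw [← Real.exp_add]; simp
      have h5 := Real.exp_pos ((c - 1) * y)
      have h6 : Real.exp (-((c - 1) * N)) ≤ Real.exp ((c - 1) * y) := by
        apply Real.exp_le_exp.2; nlinarith [hy.1, hy.2]
      rw [abs_of_nonpos h]
      refine le_trans ?_ (neg_le_abs _)
      have h7 : (-((c - 1) * y)) * Real.exp ((c - 1) * y) ≤ 1 - Real.exp ((c - 1) * y) := by nlinarith
      have h8 : 0 ≤ -((c - 1) * y) := by nlinarith
      nlinarith
  rw [e1, abs_mul, abs_mul, Real.abs_exp, abs_of_pos (by linarith : 0 < c)]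
  have e3 : Real.exp (-N) ≤ Real.exp y := Real.exp_le_exp.2 hy.1
  calc _ = c * Real.exp (-N) * ((c - 1) * Real.exp (-((c - 1) * N)) * |y|) := by ring
    _ ≤ _ := by
      have : 0 < c := by linarith
      gcongr

noncomputable def BB (c : ℝ) (V : ℝ → ℝ) (N κ x : ℝ) : ℂ :=
  ∫ y in (-N)..N, (V (x + y) : ℂ) * e (κ * Real.exp x * psi c y)

noncomputable def BB1 (c : ℝ) (V V1 : ℝ → ℝ) (N κ x : ℝ) : ℂ :=
  ∫ y in (-N)..N, ((V1 (x + y) : ℂ) * e (κ * Real.exp x * psi c y) +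
    (V (x + y) : ℂ) * (2 * Real.pi * Complex.I * ((κ * Real.exp x * psi c y : ℝ) : ℂ) *
      e (κ * Real.exp x * psi c y)))

lemma BB_deriv (c : ℝ) {V V1 : ℝ → ℝ} (N κ : ℝ) (v1 : ∀ x, HasDerivAt V (V1 x) x)
    (cV : Continuous V1) (x : ℝ) : HasDerivAt (BB c V N κ) (BB1 c V V1 N κ x) x := by
  have cV0 : Continuous V := continuous_iff_continuousAt.2 fun x => (v1 x).continuousAt
  have cp := psi_cont c
  refine hasDerivAt_param (F := fun x y => (V (x + y) : ℂ) * e (κ * Real.exp x * psi c y))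
    (F' := fun x y => ((V1 (x + y) : ℂ) * e (κ * Real.exp x * psi c y) +
    (V (x + y) : ℂ) * (2 * Real.pi * Complex.I * ((κ * Real.exp x * psi c y : ℝ) : ℂ) *
      e (κ * Real.exp x * psi c y)))) ?_ ?_ ?_ (-N) N x
  · unfold Function.uncurry; fun_prop
  · unfold Function.uncurry; fun_prop
  · intro x y
    have h1 : HasDerivAt (fun x => V (x + y)) (V1 (x + y)) x := by
      simpa using (v1 (x + y)).comp_add_const x y
    have h2 : HasDerivAt (fun x => κ * Real.exp x * psi c y) (κ * Real.exp x * psi c y) x :=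
      ((Real.hasDerivAt_exp x).const_mul κ).mul_const _
    exact h1.ofReal_comp.mul (hasDerivAt_e_comp h2)

lemma BB1_cont (c : ℝ) {V V1 : ℝ → ℝ} (N κ : ℝ) (cV0 : Continuous V)
    (cV : Continuous V1) : Continuous (BB1 c V V1 N κ) := by
  unfold BB1
  have cp := psi_cont c
  apply intervalIntegral.continuous_parametric_intervalIntegral_of_continuous'
  unfold Function.uncurry; fun_prop

lemma BBbound {c N0 M B : ℝ} (hc : 1 < c) (hN0 : 0 < N0) (hM : 0 < M) {V V1 V2 : ℝ → ℝ} (hB : 0 ≤ B)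
    (v1 : ∀ x, HasDerivAt V (V1 x) x) (v2 : ∀ x, HasDerivAt V1 (V2 x) x) (cV : Continuous V2)
    (B0 : ∀ x, |V x| ≤ B) (B1 : ∀ x, |V1 x| ≤ B) (B2 : ∀ x, |V2 x| ≤ B)
    (hV : ∀ x, M ≤ |x| → V x = 0) :
    ∃ K > 0, ∀ κ > 0, ∀ x, |x| ≤ N0 → ‖BB c V (N0 + M) κ x‖ ≤ K / √(κ * Real.exp x) ∧
      ‖BB1 c V V1 (N0 + M) κ x‖ ≤ K / √(κ * Real.exp x) := by
  have hN : 0 < N0 + M := by linarith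
  obtain ⟨k, hk, hk'⟩ := psi1_lb (N := N0 + M) hc
  obtain ⟨K0, hK0⟩ := (isCompact_Icc (a := -(N0 + M)) (b := N0 + M)).exists_bound_of_continuousOn
    (psi2_cont c).continuousOn
  have hK0' : 0 ≤ K0 := (norm_nonneg _).trans (hK0 0 ⟨by linarith, by linarith⟩)
  obtain ⟨C, hC, H⟩ := sd hk hK0' hN (psi_d1 c) (psi_d2 c) (psi2_cont c) hk' hK0
  obtain ⟨q, q1, q2, hq1, hq2, cq2, hq⟩ := exists_q hc
  have cq1 : Continuous q1 := continuous_iff_continuousAt.2 fun x => (hq2 x).continuousAt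
  have cq : Continuous q := continuous_iff_continuousAt.2 fun x => (hq1 x).continuousAt
  have cV1 : Continuous V1 := continuous_iff_continuousAt.2 fun x => (v2 x).continuousAt
  have cV0 : Continuous V := continuous_iff_continuousAt.2 fun x => (v1 x).continuousAt
  obtain ⟨Q, hQ⟩ := (isCompact_Icc (a := -(N0 + M)) (b := N0 + M)).exists_bound_of_continuousOn
    (f := fun y => |1 - q y| + |q1 y| + |q2 y|) (by fun_prop)
  have hQ' : ∀ y ∈ Set.Icc (-(N0 + M)) (N0 + M), |1 - q y| + |q1 y| + |q2 y| ≤ Q := by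
    intro y hy
    have := hQ y hy
    rwa [Real.norm_of_nonneg (by positivity)] at this
  have hQ0 : 0 ≤ Q := le_trans (by positivity) (hQ' 0 ⟨by linarith, by linarith⟩)
  refine ⟨C * B + C * (2 * Q * B) + 1, by positivity, ?_⟩
  intro κ hκ x hx
  have hY : 0 < κ * Real.exp x := by positivity
  have s0 : 0 < √(κ * Real.exp x) := Real.sqrt_pos.2 hY
  have sh : ∀ (f f' : ℝ → ℝ), (∀ x, HasDerivAt f (f' x) x) →
      ∀ y, HasDerivAt (fun y => f (x + y)) (f' (x + y)) y := by
    intro f f' hf y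
    simpa using (hf (x + y)).comp_const_add x y
  constructor
  · have := H (fun y => V (x + y)) (fun y => V1 (x + y)) B _ hB hY (sh _ _ v1) (by fun_prop)
      (fun y _ => B0 _) (fun y _ => B1 _)
    refine this.trans ?_
    apply div_le_div_of_nonneg_right _ s0.le
    have : 0 ≤ C * (2 * Q * B) := by positivity
    linarith
  · set Y := κ * Real.exp x with hYd
    have e1 : BB1 c V V1 (N0 + M) κ x = ∫ y in (-(N0 + M))..(N0 + M),
        ((V1 (x + y) * (1 - q y) - V (x + y) * q1 y : ℝ) : ℂ) * e (Y * psi c y) := by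
      have ib := ibp_e (P := fun y => V (x + y) * q y)
        (P' := fun y => V1 (x + y) * q y + V (x + y) * q1 y) (G := fun y => Y * psi c y)
        (G' := fun y => Y * psi1 c y) (a := -(N0 + M)) (b := N0 + M) (by linarith)
        (fun y _ => (sh _ _ v1 y).mul (hq1 y)) (fun y _ => (psi_d1 c y).const_mul Y) (by fun_prop)
        (by have := psi1_cont c; fun_prop)
      have hx' := abs_le.1 hx
      have z1 : V (x + (N0 + M)) = 0 := hV _ (by rw [abs_of_nonneg (by linarith)]; linarith)
      have z2 : V (x + -(N0 + M)) = 0 := hV _ (by rw [abs_of_nonpos (by linarith)]; linarith)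
      simp only [z1, z2, zero_mul, Complex.ofReal_zero, zero_sub, sub_self] at ib
      have cp := psi_cont c
      have cp1 := psi1_cont c
      unfold BB1
      rw [intervalIntegral.integral_add
        (Continuous.intervalIntegrable (by fun_prop) _ _) (Continuous.intervalIntegrable (by fun_prop) _ _)]
      have e3 : ∫ y in (-(N0 + M))..(N0 + M), (V (x + y) : ℂ) * (2 * Real.pi * Complex.I *
          ((κ * Real.exp x * psi c y : ℝ) : ℂ) * e (κ * Real.exp x * psi c y)) =
          2 * Real.pi * Complex.I * ∫ y in (-(N0 + M))..(N0 + M),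
            ((V (x + y) * q y * (Y * psi1 c y) : ℝ) : ℂ) * e (Y * psi c y) := by
        rw [← intervalIntegral.integral_const_mul]
        refine intervalIntegral.integral_congr fun y _ => ?_
        have : psi c y = q y * psi1 c y := hq y
        rw [← hYd]
        have h2 : V (x + y) * q y * (Y * psi1 c y) = V (x + y) * (Y * psi c y) := by rw [this]; ring
        simp only [h2]; push_cast; ring
      rw [e3, ib, ← sub_eq_add_neg, ← intervalIntegral.integral_sub
        (Continuous.intervalIntegrable (by fun_prop) _ _) (Continuous.intervalIntegrable (by fun_prop) _ _)]
      refine intervalIntegral.integral_congr fun y _ => ?_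
      push_cast; ring
    rw [e1]
    have bq : ∀ y ∈ Set.Icc (-(N0 + M)) (N0 + M), |1 - q y| ≤ Q ∧ |q1 y| ≤ Q ∧
        |1 - q y| + |q1 y| ≤ Q := by
      intro y hy
      have := hQ' y hy
      have a1 := abs_nonneg (1 - q y)
      have a2 := abs_nonneg (q1 y)
      have a3 := abs_nonneg (q2 y)
      refine ⟨by linarith, by linarith, by linarith⟩
    have m := H (fun y => V1 (x + y) * (1 - q y) - V (x + y) * q1 y)
      (fun y => (V2 (x + y) * (1 - q y) + V1 (x + y) * (- q1 y)) -
        (V1 (x + y) * q1 y + V (x + y) * q2 y)) (2 * Q * B) Y (by positivity) hY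
      (fun y => ((sh _ _ v2 y).mul ((hq1 y).const_sub 1)).sub ((sh _ _ v1 y).mul (hq2 y)))
      (by fun_prop)
      (fun y hy => by
        refine (abs_sub _ _).trans ?_
        rw [abs_mul, abs_mul]
        have := bq y hy
        have s1 := mul_le_mul (B1 (x + y)) (this.1) (abs_nonneg _) hB
        have s2 := mul_le_mul (B0 (x + y)) (this.2.1) (abs_nonneg _) hB
        linarith)
      (fun y hy => by
        refine (abs_sub _ _).trans ?_
        have t1 := abs_add_le (V2 (x + y) * (1 - q y)) (V1 (x + y) * (- q1 y))
        have t2 := abs_add_le (V1 (x + y) * q1 y) (V (x + y) * q2 y)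
        rw [abs_mul, abs_mul] at t1 t2
        rw [abs_neg] at t1
        have b := hQ' y hy
        have s1 := mul_le_mul_of_nonneg_right (B2 (x + y)) (abs_nonneg (1 - q y))
        have s2 := mul_le_mul_of_nonneg_right (B1 (x + y)) (abs_nonneg (q1 y))
        have s3 := mul_le_mul_of_nonneg_right (B0 (x + y)) (abs_nonneg (q2 y))
        have s4 := mul_le_mul_of_nonneg_left b hB
        have s5 : 0 ≤ B * |1 - q y| := by positivity
        have s6 : 0 ≤ B * |q2 y| := by positivity
        have s7 : 0 ≤ B * |q1 y| := by positivity
        nlinarith)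
    refine m.trans ?_
    apply div_le_div_of_nonneg_right _ s0.le
    have : 0 ≤ C * B := by positivity
    linarith

/-- shift to the stationary point -/
lemma stat_shift {c N0 M : ℝ} (hc : 1 < c) {V : ℝ → ℝ}
    (hV : ∀ x, M ≤ |x| → V x = 0) {t y x0 : ℝ} (hx0 : |x0| ≤ N0)
    (hy : y * Real.exp x0 = c * (t * Real.exp (c * x0))) :
    ∫ x in (-M)..M, (V x : ℂ) * e (t * Real.exp (c * x) - y * Real.exp x) =
      e (-((c - 1) * (t * Real.exp (c * x0)))) * BB c V (N0 + M) (y / c) x0 := by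
  have h1 : ∀ x, V x ≠ 0 → |x| < M := fun x hx => by
    by_contra h; exact hx (hV x (not_lt.1 h))
  rw [intervalIntegral.integral_eq_integral_of_support_subset]
  · unfold BB
    rw [← intervalIntegral.integral_const_mul, intervalIntegral.integral_eq_integral_of_support_subset,
      ← integral_add_left_eq_self _ x0]
    · congr 1; ext z
      have e1 : t * Real.exp (c * (x0 + z)) - y * Real.exp (x0 + z) =
          -((c - 1) * (t * Real.exp (c * x0))) + y / c * Real.exp x0 * psi c z := by
        have : y / c * Real.exp x0 = t * Real.exp (c * x0) := by
          rw [div_mul_eq_mul_div, hy]; field_simp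
        rw [this, mul_add, Real.exp_add, Real.exp_add, ← mul_assoc y, hy, psi]; ring
      rw [e1, e_add]; ring
    · intro z hz
      have : V (x0 + z) ≠ 0 := by
        intro h; simp [h] at hz
      have h2 := abs_lt.1 (h1 _ this)
      have h3 := abs_le.1 hx0
      constructor <;> linarith [h2.1, h2.2, h3.1, h3.2]
  · intro z hz
    have : V z ≠ 0 := by
      intro h; simp [h] at hz
    have h2 := abs_lt.1 (h1 _ this)
    exact ⟨h2.1, h2.2.le⟩


noncomputable def II (c M : ℝ) (V : ℝ → ℝ) (t y : ℝ) : ℂ :=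
  ∫ x in (-M)..M, (V x : ℂ) * e (t * Real.exp (c * x) - y * Real.exp x)

noncomputable def hh (c : ℝ) (W : ℝ → ℝ) (X t u : ℝ) : ℂ :=
  if 0 < u then (W (Real.log (u / X)) : ℂ) * e (t * (u / X) ^ c) else 0

lemma hh_zero_of_lt {c M : ℝ} {W : ℝ → ℝ} {X t u : ℝ} (hX : 0 < X)
    (hW : ∀ x, M ≤ |x| → W x = 0) (hu : u ≤ X * Real.exp (-M)) : hh c W X t u = 0 := by
  unfold hh
  split_ifs with h
  · have h1 : Real.log (u / X) ≤ -M := by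
      rw [Real.log_le_iff_le_exp (by positivity), div_le_iff₀ hX]; linarith
    rw [hW _ (by have := neg_le_abs (Real.log (u / X)); linarith)]; simp
  · rfl

lemma hh_zero_of_gt {c M : ℝ} {W : ℝ → ℝ} {X t u : ℝ} (hX : 0 < X)
    (hW : ∀ x, M ≤ |x| → W x = 0) (hu : X * Real.exp M ≤ u) : hh c W X t u = 0 := by
  unfold hh
  have hu0 : 0 < u := lt_of_lt_of_le (by positivity) hu
  rw [if_pos hu0]
  have h1 : M ≤ Real.log (u / X) := by
    rw [Real.le_log_iff_exp_le (by positivity), le_div_iff₀ hX]; linarith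
  rw [hW _ (by have := le_abs_self (Real.log (u / X)); linarith)]; simp

lemma hh_cont {c M : ℝ} {W : ℝ → ℝ} {X t : ℝ} (hX : 0 < X)
    (hW : ∀ x, M ≤ |x| → W x = 0) (cW : Continuous W) : Continuous (hh c W X t) := by
  rw [continuous_iff_continuousAt]
  intro u
  rcases lt_or_ge u (X * Real.exp (-M)) with h | h
  · have : hh c W X t =ᶠ[nhds u] fun _ => 0 := by
      filter_upwards [Iio_mem_nhds h] with v hv
      exact hh_zero_of_lt hX hW (le_of_lt hv)
    exact continuousAt_const.congr this.symm
  · have hu : 0 < u := lt_of_lt_of_le (by positivity) h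
    have : hh c W X t =ᶠ[nhds u] fun u => (W (Real.log (u / X)) : ℂ) * e (t * (u / X) ^ c) := by
      filter_upwards [Ioi_mem_nhds hu] with v hv
      unfold hh; rw [if_pos (Set.mem_Ioi.1 hv)]
    refine ContinuousAt.congr ?_ this.symm
    have hux : u / X ≠ 0 := by positivity
    have c1 : ContinuousAt (fun u => u / X) u := by fun_prop
    have c2 : ContinuousAt (fun u => Real.log (u / X)) u := c1.log hux
    have c3 : ContinuousAt (fun u => (u / X) ^ c) u := c1.rpow_const (Or.inl hux)
    apply ContinuousAt.mul
    · exact Complex.continuous_ofReal.continuousAt.comp (cW.continuousAt.comp c2)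
    · exact continuous_e.continuousAt.comp (c3.const_mul t)

lemma hh_fourier {c M : ℝ} {W V : ℝ → ℝ} {X t : ℝ} (hX : 0 < X)
    (hW : ∀ x, M ≤ |x| → W x = 0) (hV : ∀ x, V x = W x * Real.exp x) (m : ℝ) :
    FourierTransform.fourier (hh c W X t) m = X * II c M V t (m * X) := by
  rw [Real.fourier_real_eq_integral_exp_smul]
  set G : ℝ → ℂ := fun v => Complex.exp (↑(-2 * Real.pi * v * m) * Complex.I) • hh c W X t v with hG
  have h1 : ∫ v, G v = ∫ v in Set.Ioi 0, G v := by
    rw [setIntegral_eq_integral_of_forall_compl_eq_zero]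
    intro v hv
    simp only [Set.mem_Ioi] at hv
    simp [hG, hh, hv]
  have himg : (fun x : ℝ => X * Real.exp x) '' Set.univ = Set.Ioi 0 := by
    ext v; constructor
    · rintro ⟨x, -, rfl⟩; exact Set.mem_Ioi.2 (by positivity)
    · intro hv
      have hv' : 0 < v := hv
      refine ⟨Real.log (v / X), trivial, ?_⟩
      simp only
      rw [Real.exp_log (by positivity)]; field_simp
  have h2 := integral_image_eq_integral_abs_deriv_smul (s := Set.univ)
    (f := fun x : ℝ => X * Real.exp x) (f' := fun x => X * Real.exp x) MeasurableSet.univ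
    (fun x _ => ((Real.hasDerivAt_exp x).const_mul X).hasDerivWithinAt)
    (by
      intro x _ y _ hxy
      have := mul_left_cancel₀ hX.ne' hxy
      exact Real.exp_injective this) G
  rw [himg, setIntegral_univ] at h2
  rw [h1, h2]
  have h3 : ∀ x : ℝ, |X * Real.exp x| • G (X * Real.exp x) =
      X * ((V x : ℂ) * e (t * Real.exp (c * x) - m * X * Real.exp x)) := by
    intro x
    have hp : 0 < X * Real.exp x := by positivity
    rw [abs_of_pos hp]
    simp only [hG, hh, if_pos hp]
    have e1 : X * Real.exp x / X = Real.exp x := by field_simp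
    have e2 : Real.exp x ^ c = Real.exp (c * x) := by rw [← Real.exp_mul, mul_comm]
    rw [e1, Real.log_exp, e2, hV x, sub_eq_add_neg, e_add]
    have e3 : e (-(m * X * Real.exp x)) = Complex.exp (↑(-2 * Real.pi * (X * Real.exp x) * m) * Complex.I) := by
      unfold e; congr 1; push_cast; ring
    rw [e3, Complex.real_smul, smul_eq_mul]; push_cast; ring
  simp_rw [h3]
  rw [integral_const_mul]
  congr 1
  unfold II
  rw [intervalIntegral.integral_eq_integral_of_support_subset]
  intro z hz
  have : W z ≠ 0 := by
    intro h; simp [hV, h] at hz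
  have h2 : |z| < M := by
    by_contra h; exact this (hW z (not_lt.1 h))
  exact ⟨(abs_lt.1 h2).1, (abs_lt.1 h2).2.le⟩

lemma poisson_mid {c M B : ℝ} (hc : 1 < c) (hM : 0 < M) {W V V1 V2 : ℝ → ℝ} (hB : 0 ≤ B)
    (cW : Continuous W) (hWV : ∀ x, V x = W x * Real.exp x)
    (v1 : ∀ x, HasDerivAt V (V1 x) x) (v2 : ∀ x, HasDerivAt V1 (V2 x) x) (cV : Continuous V2)
    (B0 : ∀ x, |V x| ≤ B) (B1 : ∀ x, |V1 x| ≤ B) (B2 : ∀ x, |V2 x| ≤ B)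
    (hW : ∀ x, M ≤ |x| → W x = 0) (hV1 : ∀ x, M ≤ |x| → V1 x = 0) :
    ∃ K > 0, ∀ X ≥ 1, ∀ t > 0, ∀ mid : Finset ℕ,
      (∀ m : ℕ, m ∉ mid → (m * X ≤ c * Real.exp (-((c - 1) * M)) / 2 * t ∨
        2 * c * Real.exp ((c - 1) * M) * t ≤ m * X)) →
      ‖∑ n ∈ Finset.Icc 1 ⌊X * Real.exp M⌋₊, (W (Real.log (n / X)) : ℂ) * e (t * (n / X) ^ c) -
        X * ∑ m ∈ mid, II c M V t (m * X)‖ ≤ K * (X / t ^ 2 + 1 / X) := by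
  have aM : |M| = M := abs_of_pos hM
  have aM' : |-M| = M := by rw [abs_neg, aM]
  have hV : ∀ x, M ≤ |x| → V x = 0 := fun x hx => by rw [hWV, hW x hx, zero_mul]
  obtain ⟨K, hK, H⟩ := nsbound hc hM hB v1 v2 cV B0 B1 B2 (hV _ aM.ge) (hV _ aM'.ge)
    (hV1 _ aM.ge) (hV1 _ aM'.ge)
  have hsum : Summable (fun n : ℤ => 1 / (n : ℝ) ^ 2) := Real.summable_one_div_int_pow.2 one_lt_two
  set σ := ∑' n : ℤ, 1 / (n : ℝ) ^ 2 with hσ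
  have hσ0 : 0 ≤ σ := tsum_nonneg fun n => by positivity
  refine ⟨K * (1 + σ), by positivity, ?_⟩
  intro X hX t ht mid hmid
  have hX0 : 0 < X := by linarith
  set f : ℤ → ℂ := fun m => X * II c M V t (m * X) with hf
  set s : Finset ℤ := mid.map Nat.castEmbedding with hs
  have hc0 : 0 < c := by linarith
  have hns : ∀ m : ℤ, m ∉ s → ‖f m‖ ≤ X * (K / (t + |m * X|) ^ 2) := by
    intro m hm
    simp only [hf]
    rw [norm_mul, Complex.norm_real, Real.norm_of_nonneg hX0.le]
    refine mul_le_mul_of_nonneg_left (H t ht _ ?_) hX0.le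
    rcases le_or_gt 0 m with h | h
    · lift m to ℕ using h
      have : m ∉ mid := by
        intro h; apply hm; rw [hs, Finset.mem_map]; exact ⟨m, h, rfl⟩
      exact_mod_cast hmid m this
    · left
      have h1 : (m : ℝ) < 0 := by exact_mod_cast h
      have h2 : (m : ℝ) * X ≤ 0 := by nlinarith
      have : 0 ≤ c * Real.exp (-((c - 1) * M)) / 2 * t := by positivity
      linarith
  set g : ℤ → ℝ := fun m => (if m = 0 then K * X / t ^ 2 else 0) + K / X * (1 / (m : ℝ) ^ 2) with hg
  have hgs : HasSum g (K * X / t ^ 2 + K / X * σ) := by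
    apply HasSum.add
    · exact hasSum_ite_eq 0 _
    · exact hsum.hasSum.mul_left _
  have hbd : ∀ m : ℤ, m ∉ s → ‖f m‖ ≤ g m := by
    intro m hm
    refine (hns m hm).trans ?_
    simp only [hg]
    by_cases h0 : m = 0
    · simp [h0]; ring_nf; rfl
    · have h1 : (m : ℝ) ≠ 0 := by exact_mod_cast h0
      rw [if_neg h0, zero_add]
      have : K / (t + |m * X|) ^ 2 ≤ K / (m * X) ^ 2 := by
        apply div_le_div_of_nonneg_left hK.le (by positivity)
        rw [← sq_abs (m * X : ℝ)]
        have := abs_nonneg (m * X : ℝ)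
        gcongr; linarith
      calc _ ≤ X * (K / (m * X) ^ 2) := by gcongr
        _ = _ := by field_simp
  have hfs : Summable f := by
    refine Summable.of_norm_bounded_eventually hgs.summable ?_
    have : (s : Set ℤ).Finite := s.finite_toSet
    filter_upwards [this.compl_mem_cofinite] with m hm
    exact hbd m (by simpa using hm)
  have hfour : ∀ m : ℤ, FourierTransform.fourier (hh c W X t) (m : ℝ) = f m := fun m =>
    hh_fourier hX0 hW hWV m
  have pois := Real.tsum_eq_tsum_fourier_of_rpow_decay_of_summable
    (hh_cont (c := c) (t := t) hX0 hW cW) one_lt_two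
    (by
      apply Asymptotics.IsBigO.of_bound 1
      have := (isCompact_Icc (a := X * Real.exp (-M)) (b := X * Real.exp M)).compl_mem_cocompact
      filter_upwards [this] with u hu
      have : hh c W X t u = 0 := by
        by_cases h : u ≤ X * Real.exp (-M)
        · exact hh_zero_of_lt hX0 hW h
        · apply hh_zero_of_gt hX0 hW
          by_contra h'
          exact hu ⟨(not_le.1 h).le, (not_le.1 h').le⟩
      rw [this, norm_zero]; positivity)
    (by simpa only [hfour] using hfs) 0
  have fz : ∀ n : ℤ, (fourier n) ((0:ℝ) : UnitAddCircle) = (1:ℂ) := by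
    intro n; simp
  simp only [hfour, zero_add] at pois
  have pois2 : ∑' n : ℤ, hh c W X t n = ∑' n : ℤ, f n := by
    rw [pois]; congr 1; ext n; rw [fz, mul_one]
  have lhs : ∑' n : ℤ, hh c W X t n = ∑ n ∈ Finset.Icc 1 ⌊X * Real.exp M⌋₊,
      (W (Real.log (n / X)) : ℂ) * e (t * (n / X) ^ c) := by
    rw [tsum_eq_sum (s := (Finset.Icc 1 ⌊X * Real.exp M⌋₊).map Nat.castEmbedding), Finset.sum_map]
    · refine Finset.sum_congr rfl fun n hn => ?_
      have : (0:ℝ) < n := by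
        have := (Finset.mem_Icc.1 hn).1
        exact_mod_cast this
      simp [hh, this]
    · intro n hn
      rcases le_or_gt n 0 with h | h
      · have : ¬ (0:ℝ) < n := by rw [not_lt]; exact_mod_cast h
        simp [hh, this]
      · lift n to ℕ using h.le
        apply hh_zero_of_gt hX0 hW
        by_contra h'
        apply hn
        rw [Finset.mem_map]
        refine ⟨n, Finset.mem_Icc.2 ⟨by omega, Nat.le_floor ?_⟩, rfl⟩
        exact_mod_cast (not_le.1 h').le
  rw [← lhs, pois2, ← hfs.sum_add_tsum_subtype_compl s]
  have hsS : ∑ x ∈ s, f x = X * ∑ m ∈ mid, II c M V t (m * X) := by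
    rw [hs, Finset.sum_map, Finset.mul_sum]
    simp [hf]
  rw [hsS, add_sub_cancel_left]
  have hgsub : Summable (fun m : {x // x ∉ s} => g m) := hgs.summable.subtype _
  have b1 := tsum_of_norm_bounded hgsub.hasSum (f := fun m : {x // x ∉ s} => f m) (fun m => hbd m m.2)
  have g0 : ∀ m, 0 ≤ g m := by
    intro m; simp only [hg]
    have : 0 ≤ if m = 0 then K * X / t ^ 2 else 0 := by split_ifs <;> positivity
    positivity
  have b2 : ∑' m : {x // x ∉ s}, g m ≤ ∑' m, g m :=
    Summable.tsum_subtype_le g {x | x ∉ s} g0 hgs.summable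
  rw [hgs.tsum_eq] at b2
  refine b1.trans (b2.trans ?_)
  have p1 : 0 ≤ K * X / t ^ 2 := by positivity
  have p2 : 0 ≤ K / X := by positivity
  have : K * (1 + σ) * (X / t ^ 2 + 1 / X) = K * X / t ^ 2 + K / X * σ + (K * X / t^2 * σ + K / X) := by ring
  rw [this]
  have : 0 ≤ K * X / t ^ 2 * σ := by positivity
  linarith


lemma jensen4 {g : ℝ → ℝ} (hg : Continuous g) (h0 : ∀ x, 0 ≤ g x) :
    (∫ u in (0:ℝ)..1, g u) ^ 4 ≤ ∫ u in (0:ℝ)..1, g u ^ 4 := by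
  set μ := ∫ u in (0:ℝ)..1, g u with hμ
  have hμ0 : 0 ≤ μ := intervalIntegral.integral_nonneg zero_le_one fun x _ => h0 x
  have h1 : ∫ u in (0:ℝ)..1, (μ ^ 4 + 4 * μ ^ 3 * (g u - μ)) ≤ ∫ u in (0:ℝ)..1, g u ^ 4 := by
    apply intervalIntegral.integral_mono_on zero_le_one
    · exact Continuous.intervalIntegrable (by fun_prop) _ _
    · exact Continuous.intervalIntegrable (by fun_prop) _ _
    · intro x _
      have := h0 x
      nlinarith [mul_nonneg (sq_nonneg (g x - μ)) (by positivity : 0 ≤ g x ^ 2 + 2 * μ * g x + 3 * μ ^ 2)]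
  have h2 : ∫ u in (0:ℝ)..1, (μ ^ 4 + 4 * μ ^ 3 * (g u - μ)) = μ ^ 4 := by
    rw [intervalIntegral.integral_add (by simp) (Continuous.intervalIntegrable (by fun_prop) _ _),
      intervalIntegral.integral_const_mul, intervalIntegral.integral_sub (hg.intervalIntegrable _ _) (by simp)]
    simp [← hμ]
  linarith

lemma swap01 {g : ℝ → ℝ → ℝ} (cg : Continuous (Function.uncurry g)) :
    ∫ v in (0:ℝ)..1, ∫ u in (0:ℝ)..1, g v u = ∫ u in (0:ℝ)..1, ∫ v in (0:ℝ)..1, g v u := by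
  simp_rw [intervalIntegral.integral_of_le (zero_le_one (α := ℝ))]
  apply integral_integral_swap
  rw [Measure.prod_restrict]
  have : IntegrableOn (Function.uncurry g) (Set.Icc (0:ℝ) 1 ×ˢ Set.Icc (0:ℝ) 1) (volume.prod volume) :=
    cg.continuousOn.integrableOn_compact (isCompact_Icc.prod isCompact_Icc)
  exact this.mono_set (Set.prod_mono Set.Ioc_subset_Icc_self Set.Ioc_subset_Icc_self)

lemma cont_param {g : ℝ → ℝ → ℝ} (cg : Continuous (Function.uncurry g)) :
    Continuous (fun u => ∫ v in (0:ℝ)..1, g v u) := by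
  apply intervalIntegral.continuous_parametric_intervalIntegral_of_continuous' (f := fun u v => g v u)
  exact cg.comp continuous_swap

set_option maxHeartbeats 1000000 in
lemma sep (mid : Finset ℕ) (A A1 : ℕ → ℝ → ℂ) (φ : ℕ → ℝ → ℝ)
    (dA : ∀ m, ∀ v, HasDerivAt (A m) (A1 m v) v) (cA1 : ∀ m, Continuous (A1 m))
    (cφ : ∀ m, Continuous (φ m)) {α D : ℝ} (hA : ∀ m ∈ mid, ‖A m 0‖ ≤ α)
    (hA1 : ∀ m ∈ mid, ∀ v ∈ Set.Icc (0:ℝ) 1, ‖A1 m v‖ ≤ α)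
    (hD : ∀ a : ℕ → ℂ, (∀ m ∈ mid, ‖a m‖ ≤ α) →
      ∫ v in (0:ℝ)..1, ‖∑ m ∈ mid, a m * e (φ m v)‖ ^ 4 ≤ D) :
    ∫ v in (0:ℝ)..1, ‖∑ m ∈ mid, A m v * e (φ m v)‖ ^ 4 ≤ 16 * D := by
  have cA : ∀ m, Continuous (A m) := fun m => continuous_iff_continuousAt.2 fun x => (dA m x).continuousAt
  set g : ℝ → ℝ → ℝ := fun v u => ‖∑ m ∈ mid, A1 m u * e (φ m v)‖ with hg
  have cg : Continuous (Function.uncurry g) := by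
    simp only [hg, Function.uncurry_def]
    apply Continuous.norm
    apply continuous_finsetSum
    intro m _
    have h1 := cA1 m
    have h2 := cφ m
    fun_prop
  have cgu : ∀ v, Continuous (fun u => g v u) := fun v => cg.comp (Continuous.prodMk_right v)
  have cgv : ∀ u, Continuous (fun v => g v u) := fun u => cg.comp (Continuous.prodMk_left u)
  have pw : ∀ v ∈ Set.Icc (0:ℝ) 1, ‖∑ m ∈ mid, A m v * e (φ m v)‖ ^ 4 ≤
      8 * (‖∑ m ∈ mid, A m 0 * e (φ m v)‖ ^ 4 + ∫ u in (0:ℝ)..1, g v u ^ 4) := by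
    intro v hv
    have cs : Continuous (fun u => ∑ m ∈ mid, A1 m u * e (φ m v)) := by
      apply continuous_finsetSum
      intro m _
      have h1 := cA1 m
      fun_prop
    have f1 := intervalIntegral.integral_eq_sub_of_hasDerivAt (a := 0) (b := v)
      (f := fun u => ∑ m ∈ mid, A m u * e (φ m v)) (f' := fun u => ∑ m ∈ mid, A1 m u * e (φ m v))
      (fun u _ => HasDerivAt.fun_sum fun m _ => (dA m u).mul_const _)
      (cs.intervalIntegrable _ _)
    have f2 : ∑ m ∈ mid, A m v * e (φ m v) = ∑ m ∈ mid, A m 0 * e (φ m v) +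
        ∫ u in (0:ℝ)..v, ∑ m ∈ mid, A1 m u * e (φ m v) := by rw [f1]; ring
    have f3 : ‖∫ u in (0:ℝ)..v, ∑ m ∈ mid, A1 m u * e (φ m v)‖ ≤ ∫ u in (0:ℝ)..1, g v u := by
      refine (intervalIntegral.norm_integral_le_integral_norm hv.1).trans ?_
      apply intervalIntegral.integral_mono_interval le_rfl hv.1 hv.2
      · exact Filter.Eventually.of_forall fun u => norm_nonneg _
      · exact (cgu v).intervalIntegrable _ _
    have f4 := jensen4 (cgu v) (fun u => norm_nonneg _)
    have f5 : ‖∑ m ∈ mid, A m v * e (φ m v)‖ ≤ ‖∑ m ∈ mid, A m 0 * e (φ m v)‖ +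
      ∫ u in (0:ℝ)..1, g v u := by
      rw [f2]; exact (norm_add_le _ _).trans (by gcongr)
    have i0 : 0 ≤ ∫ u in (0:ℝ)..1, g v u :=
      intervalIntegral.integral_nonneg zero_le_one fun x _ => norm_nonneg _
    have n0 := norm_nonneg (∑ m ∈ mid, A m 0 * e (φ m v))
    have f6 : ‖∑ m ∈ mid, A m v * e (φ m v)‖ ^ 4 ≤ _ := pow_le_pow_left₀ (norm_nonneg _) f5 4
    refine f6.trans ?_
    have : ∀ a b : ℝ, (a + b) ^ 4 ≤ 8 * (a ^ 4 + b ^ 4) := by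
      intro a b
      nlinarith [sq_nonneg (a - b), sq_nonneg (a + b), sq_nonneg (a ^ 2 - b ^ 2),
        mul_nonneg (sq_nonneg (a - b)) (sq_nonneg (a + b)), sq_nonneg ((a - b) ^ 2), mul_nonneg (sq_nonneg (a - b)) (add_nonneg (sq_nonneg a) (sq_nonneg b))]
    refine (this _ _).trans ?_
    gcongr
  have c0 : Continuous (fun v => ‖∑ m ∈ mid, A m 0 * e (φ m v)‖ ^ 4) := by
    apply Continuous.pow
    apply Continuous.norm
    apply continuous_finsetSum
    intro m _
    have h2 := cφ m
    fun_prop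
  have c1 : Continuous (fun v => ‖∑ m ∈ mid, A m v * e (φ m v)‖ ^ 4) := by
    apply Continuous.pow
    apply Continuous.norm
    apply continuous_finsetSum
    intro m _
    have h2 := cφ m
    have h1 := cA m
    fun_prop
  have cg4 : Continuous (Function.uncurry fun v u => g v u ^ 4) := cg.pow 4
  have c2 : Continuous (fun v => ∫ u in (0:ℝ)..1, g v u ^ 4) :=
    intervalIntegral.continuous_parametric_intervalIntegral_of_continuous' cg4 _ _
  have m1 : ∫ v in (0:ℝ)..1, ‖∑ m ∈ mid, A m v * e (φ m v)‖ ^ 4 ≤ ∫ v in (0:ℝ)..1,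
      8 * (‖∑ m ∈ mid, A m 0 * e (φ m v)‖ ^ 4 + ∫ u in (0:ℝ)..1, g v u ^ 4) :=
    intervalIntegral.integral_mono_on zero_le_one (c1.intervalIntegrable _ _)
      (Continuous.intervalIntegrable (by fun_prop) _ _) pw
  refine m1.trans ?_
  rw [intervalIntegral.integral_const_mul, intervalIntegral.integral_add (c0.intervalIntegrable _ _)
    (c2.intervalIntegrable _ _)]
  have m2 := hD (fun m => A m 0) hA
  have m3 : ∫ v in (0:ℝ)..1, ∫ u in (0:ℝ)..1, g v u ^ 4 = ∫ u in (0:ℝ)..1, ∫ v in (0:ℝ)..1, g v u ^ 4 :=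
    swap01 cg4
  have c3 : Continuous (fun u => ∫ v in (0:ℝ)..1, g v u ^ 4) := cont_param cg4
  have m4 : ∫ u in (0:ℝ)..1, ∫ v in (0:ℝ)..1, g v u ^ 4 ≤ ∫ u in (0:ℝ)..1, D := by
    apply intervalIntegral.integral_mono_on zero_le_one (c3.intervalIntegrable _ _) (by simp)
    intro u hu
    exact hD (fun m => A1 m u) (fun m hm => hA1 m hm u hu)
  simp only [intervalIntegral.integral_const, sub_zero, one_smul] at m4
  rw [m3]; linarith


lemma coef_bound (s : Finset ℕ) (a : ℕ → ℂ) (l : ℕ → ℝ) {β σ : ℝ} (hβ : 0 < β) (hσ : 0 < σ) :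
    ∫ v in (0:ℝ)..1, ‖∑ m ∈ s, a m * e (-(σ * Real.exp (-(β * v)) * l m))‖ ^ 4 ≤
      Real.exp β / (β * σ) * ∫ t in (0:ℝ)..σ, ‖∑ m ∈ s, (starRingEnd ℂ) (a m) * e (t * l m)‖ ^ 4 := by
  set F : ℝ → ℝ := fun t => ‖∑ m ∈ s, (starRingEnd ℂ) (a m) * e (t * l m)‖ ^ 4 with hF
  have cF : Continuous F := by
    apply Continuous.pow; apply Continuous.norm
    apply continuous_finsetSum; intro m _; fun_prop
  have F0 : ∀ t, 0 ≤ F t := fun t => by positivity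
  have h1 : ∀ t, ‖∑ m ∈ s, a m * e (-(t * l m))‖ ^ 4 = F t := by
    intro t
    simp only [hF]
    rw [← RCLike.norm_conj (∑ m ∈ s, (starRingEnd ℂ) (a m) * e (t * l m)), map_sum]
    simp only [map_mul, Complex.conj_conj, conj_e]
  simp only [h1]
  have h2 : ∀ v, HasDerivAt (fun v => σ * Real.exp (-(β * v))) (-(β * σ * Real.exp (-(β * v)))) v := by
    intro v
    have := ((hasDerivAt_expmul (-β) v).const_mul σ)
    simp only [neg_mul] at this
    exact this.congr_deriv (by ring)
  have h3 := intervalIntegral.integral_comp_mul_deriv (a := 0) (b := 1)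
    (f := fun v => σ * Real.exp (-(β * v))) (f' := fun v => -(β * σ * Real.exp (-(β * v)))) (g := F)
    (fun v _ => h2 v) (by fun_prop) cF
  have h4 : ∫ v in (0:ℝ)..1, F (σ * Real.exp (-(β * v))) ≤ ∫ v in (0:ℝ)..1,
      -(Real.exp β / (β * σ)) * ((F ∘ fun v => σ * Real.exp (-(β * v))) v * -(β * σ * Real.exp (-(β * v)))) := by
    apply intervalIntegral.integral_mono_on zero_le_one
    · exact Continuous.intervalIntegrable (by fun_prop) _ _
    · exact Continuous.intervalIntegrable (by fun_prop) _ _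
    · intro v hv
      have : -(Real.exp β / (β * σ)) * ((F ∘ fun v => σ * Real.exp (-(β * v))) v *
          -(β * σ * Real.exp (-(β * v)))) = F (σ * Real.exp (-(β * v))) * Real.exp (β - β * v) := by
        rw [sub_eq_add_neg, Real.exp_add]
        simp only [Function.comp]
        field_simp
      rw [this]
      apply le_mul_of_one_le_right (F0 _)
      apply Real.one_le_exp
      nlinarith [hv.2]
  refine h4.trans ?_
  rw [intervalIntegral.integral_const_mul, h3, neg_mul, ← mul_neg, ← intervalIntegral.integral_symm]
  apply mul_le_mul_of_nonneg_left _ (by positivity)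
  simp only [mul_zero, neg_zero, Real.exp_zero, mul_one]
  apply intervalIntegral.integral_mono_interval (by positivity) _ le_rfl
  · exact Filter.Eventually.of_forall F0
  · exact cF.intervalIntegrable _ _
  · apply mul_le_of_le_one_right hσ.le
    apply Real.exp_le_one_iff.2; linarith

set_option maxHeartbeats 2000000 in
lemma mid_bound {c M B θ k1 k2 : ℝ} (hc : 1 < c) (hM : 0 < M) {V V1 V2 : ℝ → ℝ} (hB : 0 ≤ B)
    (hk1 : 0 < k1) (hk12 : k1 ≤ k2)
    (v1 : ∀ x, HasDerivAt V (V1 x) x) (v2 : ∀ x, HasDerivAt V1 (V2 x) x) (cV : Continuous V2)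
    (B0 : ∀ x, |V x| ≤ B) (B1 : ∀ x, |V1 x| ≤ B) (B2 : ∀ x, |V2 x| ≤ B)
    (hV : ∀ x, M ≤ |x| → V x = 0) (hH : HH (c * (1 / (c - 1))) θ) :
    ∃ K > 0, ∀ X ≥ 1, ∀ P ≥ 1, P ≤ 2 * X ^ 2 → ∀ mid : Finset ℕ,
      (∀ m ∈ mid, k1 * P ≤ m * X ∧ m * X ≤ Real.exp 1 * k2 * P) →
      ∫ v in (0:ℝ)..1, ‖X * ∑ m ∈ mid, II c M V (P * Real.exp v) (m * X)‖ ^ 4 ≤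
        K * (X ^ (2 - θ) * P ^ θ) := by
  have hc0 : 0 < c - 1 := by linarith
  have hcp : 0 < c := by linarith
  set β := 1 / (c - 1) with hβ
  have pβ : 0 < β := by positivity
  have hk2 : 0 < k2 := by linarith
  set z1 := Real.exp 1 * k2 with hz1
  have pz1 : 0 < z1 := by positivity
  set N0 := β * (|Real.log (k1 / c)| + |Real.log (z1 / c)| + 1) with hN0
  have pN0 : 0 < N0 := by positivity
  obtain ⟨K0, pK0, HK0⟩ := BBbound hc pN0 hM hB v1 v2 cV B0 B1 B2 hV
  have cV1 : Continuous V1 := continuous_iff_continuousAt.2 fun x => (v2 x).continuousAt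
  have cV0 : Continuous V := continuous_iff_continuousAt.2 fun x => (v1 x).continuousAt
  have hR : 1 ≤ z1 / k1 := by
    rw [one_le_div hk1, hz1]
    have := Real.add_one_le_exp 1
    nlinarith
  obtain ⟨C, pC, HC⟩ := HH_long hH (z1 / k1) hR
  set s1 := (c - 1) * (z1 / c) ^ (c * β) with hs1
  have ps1 : 0 < s1 := by positivity
  set κ0 := k1 / c * Real.exp (-N0) with hκ0
  have pκ0 : 0 < κ0 := by positivity
  set α0 := (1 + β) * (K0 / √κ0) with hα0
  have pα0 : 0 < α0 := by positivity
  refine ⟨16 * (Real.exp β / β) * C * α0 ^ 4 * (1 + 2 * z1 ^ 2 / s1) * z1 ^ (2 + θ), by positivity, ?_⟩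
  intro X hX P hP hPX mid hmid
  have pX : 0 < X := by linarith
  have pP : 0 < P := by linarith
  rcases mid.eq_empty_or_nonempty with he | hne
  · subst he; simp; positivity
  set Z := z1 * P / X with hZ
  have pZ : 0 < Z := by positivity
  have mpos : ∀ m ∈ mid, (1:ℝ) ≤ m := by
    intro m hm
    have h1 := (hmid m hm).1
    have h2 : 0 < (m:ℝ) * X := lt_of_lt_of_le (by positivity) h1
    have h3 : (0:ℝ) < m := by by_contra h; nlinarith
    exact_mod_cast h3
  have mZ : ∀ m ∈ mid, Z / (z1 / k1) ≤ (m:ℝ) ∧ (m:ℝ) ≤ Z := by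
    intro m hm
    have h1 := hmid m hm
    constructor
    · have : Z / (z1 / k1) = k1 * P / X := by rw [hZ]; field_simp
      rw [this, div_le_iff₀ pX]; exact h1.1
    · rw [hZ, le_div_iff₀ pX]; exact h1.2
  have Z1 : 1 ≤ Z := by
    obtain ⟨m, hm⟩ := hne
    exact (mpos m hm).trans (mZ m hm).2
  set Lm : ℕ → ℝ := fun m => Real.log (m * X / (c * P)) * β with hLm
  set A : ℕ → ℝ → ℂ := fun m v => BB c V (N0 + M) (m * X / c) (Lm m - β * v) with hA
  set A1 : ℕ → ℝ → ℂ := fun m v => (-β : ℝ) • BB1 c V V1 (N0 + M) (m * X / c) (Lm m - β * v) with hA1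
  set σ := s1 * P with hσ
  have pσ : 0 < σ := by positivity
  set φ : ℕ → ℝ → ℝ := fun m v => -(σ * Real.exp (-(β * v)) * ((m:ℝ) / Z) ^ (c * β)) with hφ
  have dlin : ∀ m v, HasDerivAt (fun v => Lm m - β * v) (-β) v := by
    intro m v
    simpa using ((hasDerivAt_id v).const_mul β).const_sub (Lm m)
  have dA : ∀ m, ∀ v, HasDerivAt (A m) (A1 m v) v := by
    intro m v
    exact (BB_deriv c (N0 + M) (m * X / c) v1 cV1 (Lm m - β * v)).scomp v (dlin m v)
  have cA1 : ∀ m, Continuous (A1 m) := by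
    intro m
    have := BB1_cont c (N0 + M) (m * X / c) cV0 cV1
    exact (this.comp (by fun_prop : Continuous fun v => Lm m - β * v)).const_smul (-β)
  have cφ : ∀ m, Continuous (φ m) := by intro m; simp only [hφ]; fun_prop
  have xb : ∀ m ∈ mid, ∀ v ∈ Set.Icc (0:ℝ) 1, |Lm m - β * v| ≤ N0 := by
    intro m hm v hv
    have h1 := hmid m hm
    have pm : 0 < (m:ℝ) := by linarith [mpos m hm]
    have l1 : Real.log (k1 / c) ≤ Real.log (m * X / (c * P)) := by
      apply Real.log_le_log (by positivity)
      rw [div_le_div_iff₀ hcp (by positivity)]; nlinarith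
    have l2 : Real.log (m * X / (c * P)) ≤ Real.log (z1 / c) := by
      apply Real.log_le_log (by positivity)
      rw [div_le_div_iff₀ (by positivity) hcp]; nlinarith
    have a1 := neg_abs_le (Real.log (k1 / c))
    have a2 := le_abs_self (Real.log (z1 / c))
    have a3 := abs_nonneg (Real.log (k1 / c))
    have a4 := abs_nonneg (Real.log (z1 / c))
    have : Lm m - β * v = β * (Real.log (m * X / (c * P)) - v) := by simp only [hLm]; ring
    rw [this, abs_mul, abs_of_pos pβ, hN0]
    apply mul_le_mul_of_nonneg_left _ pβ.le
    rw [abs_le]; constructor <;> linarith [hv.1, hv.2]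
  have sq : ∀ m ∈ mid, ∀ v ∈ Set.Icc (0:ℝ) 1,
      K0 / √(m * X / c * Real.exp (Lm m - β * v)) ≤ K0 / √κ0 / √P := by
    intro m hm v hv
    rw [div_div, ← Real.sqrt_mul pκ0.le]
    apply div_le_div_of_nonneg_left pK0.le (by positivity)
    apply Real.sqrt_le_sqrt
    have h1 := hmid m hm
    have h2 : Real.exp (-N0) ≤ Real.exp (Lm m - β * v) :=
      Real.exp_le_exp.2 (abs_le.1 (xb m hm v hv)).1
    calc κ0 * P = k1 * P / c * Real.exp (-N0) := by rw [hκ0]; ring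
      _ ≤ _ := mul_le_mul (div_le_div_of_nonneg_right h1.1 hcp.le) h2 (Real.exp_pos _).le
            (div_nonneg ((by positivity : (0:ℝ) ≤ k1 * P).trans h1.1) hcp.le)
  have pm : ∀ m ∈ mid, 0 < (m * X / c : ℝ) := by
    intro m hm
    have : 0 < (m:ℝ) := by linarith [mpos m hm]
    positivity
  have hαP : 0 < K0 / √κ0 / √P := by positivity
  have bA : ∀ m ∈ mid, ‖A m 0‖ ≤ α0 / √P := by
    intro m hm
    have h0 : (0:ℝ) ∈ Set.Icc (0:ℝ) 1 := ⟨le_rfl, zero_le_one⟩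
    have := ((HK0 _ (pm m hm) _ (xb m hm 0 h0)).1).trans (sq m hm 0 h0)
    refine this.trans ?_
    rw [hα0, mul_div_assoc]
    apply le_mul_of_one_le_left hαP.le; linarith
  have bA1 : ∀ m ∈ mid, ∀ v ∈ Set.Icc (0:ℝ) 1, ‖A1 m v‖ ≤ α0 / √P := by
    intro m hm v hv
    have := ((HK0 _ (pm m hm) _ (xb m hm v hv)).2).trans (sq m hm v hv)
    simp only [hA1]
    have e1 : α0 / √P = (1 + β) * (K0 / √κ0 / √P) := by rw [hα0]; ring
    rw [norm_smul, norm_neg, Real.norm_of_nonneg pβ.le, e1]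
    exact mul_le_mul (by linarith) this (norm_nonneg _) (by linarith)
  have hD : ∀ a : ℕ → ℂ, (∀ m ∈ mid, ‖a m‖ ≤ α0 / √P) →
      ∫ v in (0:ℝ)..1, ‖∑ m ∈ mid, a m * e (φ m v)‖ ^ 4 ≤
        Real.exp β / (β * σ) * ((σ / Z ^ 2 + 1) * (C * (α0 / √P) ^ 4 * Z ^ (4 + θ))) := by
    intro a ha
    refine (coef_bound mid a (fun m => ((m:ℝ) / Z) ^ (c * β)) pβ pσ).trans ?_
    apply mul_le_mul_of_nonneg_left _ (by positivity)
    exact HC Z Z1 mid mZ (fun m => (starRingEnd ℂ) (a m)) (α0 / √P) (by positivity)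
      (fun m hm => by rw [RCLike.norm_conj]; exact ha m hm) σ pσ.le
  have main := sep mid A A1 φ dA cA1 cφ bA bA1 hD
  have eqI : ∀ v ∈ Set.uIcc (0:ℝ) 1, ‖X * ∑ m ∈ mid, II c M V (P * Real.exp v) (m * X)‖ ^ 4 =
      X ^ 4 * ‖∑ m ∈ mid, A m v * e (φ m v)‖ ^ 4 := by
    intro v hv
    rw [Set.uIcc_of_le zero_le_one] at hv
    rw [norm_mul, mul_pow, Complex.norm_real, Real.norm_of_nonneg pX.le]
    congr 3
    refine Finset.sum_congr rfl fun m hm => ?_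
    have pm0 : 0 < (m:ℝ) := by linarith [mpos m hm]
    have hl : (c - 1) * Lm m = Real.log (m * X / (c * P)) := by
      simp only [hLm, hβ]; field_simp
    have hb1 : (c - 1) * β = 1 := by rw [hβ]; field_simp
    have hcb : c * β = 1 + β := by linarith
    have st := stat_shift (c := c) (N0 := N0) (M := M) hc hV (t := P * Real.exp v) (y := m * X)
      (x0 := Lm m - β * v) (xb m hm v hv) (by
        have : Real.exp (c * (Lm m - β * v)) =
          Real.exp ((c - 1) * Lm m) * Real.exp (-v) * Real.exp (Lm m - β * v) := by
          rw [← Real.exp_add, ← Real.exp_add]; congr 1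
          linear_combination (-v) * hb1
        rw [this, hl, Real.exp_log (by positivity), Real.exp_neg]
        field_simp)
    rw [II, st, mul_comm]
    congr 2
    simp only [hφ]
    congr 1
    have w1 : ((m:ℝ) / Z) ^ (c * β) * (z1 / c) ^ (c * β) = Real.exp (c * Lm m) := by
      rw [← Real.mul_rpow (by positivity) (by positivity)]
      have : (m:ℝ) / Z * (z1 / c) = m * X / (c * P) := by rw [hZ]; field_simp
      rw [this, Real.rpow_def_of_pos (by positivity)]
      congr 1; simp only [hLm]; ring
    have w2 : Real.exp (c * (Lm m - β * v)) = Real.exp (c * Lm m) * (Real.exp (-(β * v)) * Real.exp (-v)) := by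
      rw [← Real.exp_add, ← Real.exp_add]; congr 1
      linear_combination (-v) * hcb
    rw [w2, ← w1, hσ, hs1]
    have w3 : Real.exp v * Real.exp (-v) = 1 := by rw [← Real.exp_add]; simp
    linear_combination ((c - 1) * P * ((m:ℝ) / Z) ^ (c * β) * (z1 / c) ^ (c * β) * Real.exp (-(β * v))) * w3
  rw [intervalIntegral.integral_congr eqI, intervalIntegral.integral_const_mul]
  have sP : (√P) ^ 4 = P ^ 2 := by
    rw [show 4 = 2 * 2 from rfl, pow_mul, Real.sq_sqrt pP.le]
  have Zp : Z ^ (4 + θ) = Z ^ 2 * Z ^ (2 + θ) := by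
    rw [← Real.rpow_natCast Z 2, ← Real.rpow_add pZ]; congr 1; push_cast; ring
  have Zp2 : Z ^ (2 + θ) = z1 ^ (2 + θ) * (P / X) ^ (2 + θ) := by
    rw [← Real.mul_rpow (by positivity) (by positivity)]; congr 1; rw [hZ]; ring
  have XP : X ^ 4 * (P / X) ^ (2 + θ) = P ^ 2 * (X ^ (2 - θ) * P ^ θ) := by
    rw [Real.div_rpow pP.le pX.le, Real.rpow_add pP, Real.rpow_add pX, Real.rpow_sub pX]
    norm_num
    have := Real.rpow_pos_of_pos pX θ
    field_simp
  have hZ2 : Z ^ 2 / σ ≤ 2 * z1 ^ 2 / s1 := by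
    rw [div_le_div_iff₀ pσ ps1, hσ, hZ, div_pow]
    have : P ^ 2 / X ^ 2 ≤ 2 * P := by
      rw [div_le_iff₀ (by positivity)]; nlinarith
    calc (z1 * P) ^ 2 / X ^ 2 * s1 = z1 ^ 2 * s1 * (P ^ 2 / X ^ 2) := by ring
      _ ≤ z1 ^ 2 * s1 * (2 * P) := by gcongr
      _ = _ := by ring
  calc _ ≤ X ^ 4 * (16 * (Real.exp β / (β * σ) * ((σ / Z ^ 2 + 1) * (C * (α0 / √P) ^ 4 * Z ^ (4 + θ))))) :=
        mul_le_mul_of_nonneg_left main (by positivity)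
    _ = 16 * (Real.exp β / β) * C * α0 ^ 4 * z1 ^ (2 + θ) * (1 + Z ^ 2 / σ) *
        (X ^ 4 * (P / X) ^ (2 + θ) / P ^ 2) := by
        rw [Zp, Zp2, div_pow α0, sP]; clear_value Z σ; field_simp
    _ = 16 * (Real.exp β / β) * C * α0 ^ 4 * z1 ^ (2 + θ) * (1 + Z ^ 2 / σ) * (X ^ (2 - θ) * P ^ θ) := by
        rw [XP]; field_simp
    _ ≤ 16 * (Real.exp β / β) * C * α0 ^ 4 * z1 ^ (2 + θ) * (1 + 2 * z1 ^ 2 / s1) * (X ^ (2 - θ) * P ^ θ) := by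
        gcongr
    _ = _ := by ring


lemma bump_exists (L : ℝ) (hL : 0 ≤ L) : ∃ W V V1 V2 : ℝ → ℝ, ∃ B : ℝ, 0 ≤ B ∧ Continuous W ∧
    (∀ x, V x = W x * Real.exp x) ∧ (∀ x, HasDerivAt V (V1 x) x) ∧ (∀ x, HasDerivAt V1 (V2 x) x) ∧
    Continuous V2 ∧ (∀ x, |V x| ≤ B) ∧ (∀ x, |V1 x| ≤ B) ∧ (∀ x, |V2 x| ≤ B) ∧
    (∀ x, L + 3 ≤ |x| → W x = 0) ∧ (∀ x, L + 3 ≤ |x| → V1 x = 0) ∧ (∀ x, 0 ≤ W x) ∧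
    (∀ x, W x ≤ 1) ∧ (∀ x, |x| ≤ L → W x = 1) := by
  let f : ContDiffBump (0:ℝ) := ⟨L + 1, L + 2, by linarith, by linarith⟩
  have cf : ContDiff ℝ 2 (fun x => f x * Real.exp x) := f.contDiff.mul Real.contDiff_exp
  have z0 : ∀ x, L + 2 ≤ |x| → f x = 0 := by
    intro x hx
    apply f.zero_of_le_dist
    rw [Real.dist_eq, sub_zero]; exact hx
  have sup : HasCompactSupport (fun x => f x * Real.exp x) :=
    f.hasCompactSupport.mul_right
  have c1 : ContDiff ℝ 1 (deriv (fun x => f x * Real.exp x)) := by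
    have : ContDiff ℝ (1 + 1) (fun x => f x * Real.exp x) := by norm_num; exact cf
    exact (contDiff_succ_iff_deriv.1 this).2.2
  have c2 : Continuous (deriv (deriv (fun x => f x * Real.exp x))) := c1.continuous_deriv le_rfl
  obtain ⟨b0, h0⟩ := cf.continuous.bounded_above_of_compact_support sup
  obtain ⟨b1, h1⟩ := c1.continuous.bounded_above_of_compact_support sup.deriv
  obtain ⟨b2, h2⟩ := c2.bounded_above_of_compact_support sup.deriv.deriv
  refine ⟨f, fun x => f x * Real.exp x, deriv (fun x => f x * Real.exp x),
    deriv (deriv (fun x => f x * Real.exp x)), max b0 (max b1 b2), ?_, f.continuous, fun x => rfl,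
    fun x => (cf.differentiable (by norm_num) x).hasDerivAt,
    fun x => (c1.differentiable (by norm_num) x).hasDerivAt, c2, ?_, ?_, ?_, ?_, ?_, ?_, ?_, ?_⟩
  · exact le_trans ((norm_nonneg _).trans (h0 0)) (le_max_left _ _)
  · exact fun x => (h0 x).trans (le_max_left _ _)
  · exact fun x => (h1 x).trans ((le_max_left _ _).trans (le_max_right _ _))
  · exact fun x => (h2 x).trans ((le_max_right _ _).trans (le_max_right _ _))
  · exact fun x hx => z0 x (by linarith)
  · intro x hx
    have : (fun x => f x * Real.exp x) =ᶠ[nhds x] fun _ => 0 := by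
      have o : IsOpen {y : ℝ | L + 2 < |y|} := isOpen_lt continuous_const continuous_abs
      filter_upwards [o.mem_nhds (show L + 2 < |x| by linarith)] with y hy
      rw [z0 y (le_of_lt hy), zero_mul]
    rw [this.deriv_eq]; simp
  · exact fun x => f.nonneg
  · exact fun x => f.le_one
  · intro x hx
    apply f.one_of_mem_closedBall
    rw [Metric.mem_closedBall, Real.dist_eq, sub_zero]
    show |x| ≤ L + 1
    linarith

lemma eadic {F : ℝ → ℝ} (hF : Continuous F) (h0 : ∀ t, 0 ≤ F t) {T B : ℝ} (hT : 1 ≤ T) (hB : 0 ≤ B)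
    (h1 : ∫ t in (0:ℝ)..1, F t ≤ B)
    (h : ∀ P, 1 ≤ P → P ≤ T → ∫ t in P..(Real.exp 1 * P), F t ≤ B) :
    ∫ t in (0:ℝ)..T, F t ≤ B * (Real.log T + 2) := by
  have ind : ∀ J : ℕ, (∀ j < J, Real.exp j ≤ T) → ∫ t in (0:ℝ)..(Real.exp J), F t ≤ B * (J + 1) := by
    intro J
    induction J with
    | zero => intro _; simpa using h1
    | succ J ih =>
      intro hJ
      have a1 := ih fun j hj => hJ j (by omega)
      have a2 := h (Real.exp J) (Real.one_le_exp (by positivity)) (hJ J (by omega))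
      have e1 : Real.exp ((J + 1 : ℕ) : ℝ) = Real.exp 1 * Real.exp J := by
        rw [← Real.exp_add]; congr 1; push_cast; ring
      rw [e1, ← intervalIntegral.integral_add_adjacent_intervals (b := Real.exp J)
        (hF.intervalIntegrable _ _) (hF.intervalIntegrable _ _)]
      push_cast; linarith
  have hl : 0 ≤ Real.log T := Real.log_nonneg hT
  have a := ind ⌈Real.log T⌉₊ (by
    intro j hj
    have := Nat.lt_ceil.1 hj
    rw [← Real.le_log_iff_exp_le (by linarith)]; exact this.le)
  have b : ∫ t in (0:ℝ)..T, F t ≤ ∫ t in (0:ℝ)..(Real.exp ⌈Real.log T⌉₊), F t := by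
    apply intervalIntegral.integral_mono_interval le_rfl (by linarith)
    · rw [← Real.log_le_iff_le_exp (by linarith)]; exact Nat.le_ceil _
    · exact Filter.Eventually.of_forall h0
    · exact hF.intervalIntegrable _ _
  refine b.trans (a.trans ?_)
  apply mul_le_mul_of_nonneg_left _ hB
  linarith [Nat.ceil_lt_add_one hl]

lemma exp_subst {F : ℝ → ℝ} (hF : Continuous F) (h0 : ∀ t, 0 ≤ F t) {P : ℝ} (hP : 0 < P) :
    ∫ t in P..(Real.exp 1 * P), F t ≤ Real.exp 1 * P * ∫ v in (0:ℝ)..1, F (P * Real.exp v) := by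
  have h := intervalIntegral.integral_comp_mul_deriv (a := 0) (b := 1) (f := fun v => P * Real.exp v)
    (f' := fun v => P * Real.exp v) (g := F)
    (fun x _ => (Real.hasDerivAt_exp x).const_mul P) (by fun_prop) hF
  simp only [Real.exp_zero, mul_one] at h
  rw [mul_comm (Real.exp 1) P, ← h, ← intervalIntegral.integral_const_mul]
  apply intervalIntegral.integral_mono_on zero_le_one
  · apply Continuous.intervalIntegrable; simp only [Function.comp_def]; fun_prop
  · apply Continuous.intervalIntegrable; fun_prop
  · intro x hx
    simp only [Function.comp_def]
    rw [mul_comm]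
    apply mul_le_mul_of_nonneg_right _ (h0 _)
    apply mul_le_mul_of_nonneg_left _ hP.le
    exact Real.exp_le_exp.2 hx.2


noncomputable def FW (W : ℝ → ℝ) (c M X t : ℝ) : ℂ :=
  ∑ n ∈ Finset.Icc 1 ⌊X * Real.exp M⌋₊, (W (Real.log (n / X)) : ℂ) * e (t * ((n:ℝ) / X) ^ c)

lemma FW_cont (W : ℝ → ℝ) (c M X : ℝ) : Continuous (FW W c M X) := by
  unfold FW
  fun_prop

lemma II_cont {c M : ℝ} {V : ℝ → ℝ} (hV : Continuous V) (y : ℝ) : Continuous (fun t => II c M V t y) := by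
  unfold II
  apply intervalIntegral.continuous_parametric_intervalIntegral_of_continuous'
  simp only [Function.uncurry_def]
  fun_prop

lemma four_add (a b : ℝ) (ha : 0 ≤ a) (hb : 0 ≤ b) : (a + b) ^ 4 ≤ 8 * (a ^ 4 + b ^ 4) := by
  nlinarith [sq_nonneg (a ^ 2 - b ^ 2), sq_nonneg (a - b), mul_nonneg ha hb, sq_nonneg (a + b),
    mul_nonneg (sq_nonneg (a - b)) (sq_nonneg (a + b)), mul_nonneg (sq_nonneg (a - b)) (mul_nonneg ha hb),
    mul_nonneg (sq_nonneg (a - b)) (sq_nonneg (a - b))]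

set_option maxHeartbeats 1000000 in
lemma block {c M B θ κ : ℝ} (hc : 1 < c) (hM : 0 < M) (hθ : 0 < θ) (hκ : κ = θ / (1 + θ))
    {W V V1 V2 : ℝ → ℝ} (hB : 0 ≤ B)
    (cW : Continuous W) (hWV : ∀ x, V x = W x * Real.exp x)
    (v1 : ∀ x, HasDerivAt V (V1 x) x) (v2 : ∀ x, HasDerivAt V1 (V2 x) x) (cV : Continuous V2)
    (B0 : ∀ x, |V x| ≤ B) (B1 : ∀ x, |V1 x| ≤ B) (B2 : ∀ x, |V2 x| ≤ B)
    (hW : ∀ x, M ≤ |x| → W x = 0) (hV1 : ∀ x, M ≤ |x| → V1 x = 0)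
    (hH : HH (c * (1 / (c - 1))) θ) :
    ∃ K > 0, ∀ X ≥ 1, ∀ P ≥ 1, P ≤ 2 * X ^ (2 - κ) →
      ∫ t in P..(Real.exp 1 * P), ‖FW W c M X t‖ ^ 4 ≤ K * X ^ 4 := by
  have hc0 : 0 < c - 1 := by linarith
  obtain ⟨K1, pK1, H1⟩ := poisson_mid hc hM hB cW hWV v1 v2 cV B0 B1 B2 hW hV1
  have hV : ∀ x, M ≤ |x| → V x = 0 := fun x hx => by rw [hWV, hW x hx, zero_mul]
  set k1 := c * Real.exp (-((c - 1) * M)) / 2 with hk1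
  set k2 := 2 * c * Real.exp ((c - 1) * M) with hk2
  have pk1 : 0 < k1 := by positivity
  have pk2 : 0 < k2 := by positivity
  have k12 : k1 ≤ k2 := by
    have a1 : Real.exp (-((c - 1) * M)) ≤ 1 := Real.exp_le_one_iff.2 (by nlinarith)
    have a2 : 1 ≤ Real.exp ((c - 1) * M) := Real.one_le_exp (by positivity)
    rw [hk1, hk2]; nlinarith
  obtain ⟨K2, pK2, H2⟩ := mid_bound hc hM hB pk1 k12 v1 v2 cV B0 B1 B2 hV hH
  have cV0 : Continuous V := continuous_iff_continuousAt.2 fun x => (v1 x).continuousAt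
  have pκ : 0 < κ := by rw [hκ]; positivity
  have hκ2 : (2 - κ) * (1 + θ) = 2 + θ := by rw [hκ]; field_simp; ring
  refine ⟨Real.exp 1 * (8 * (K2 * 2 ^ (1 + θ) + 16 * K1 ^ 4 * 2)), by positivity, ?_⟩
  intro X hX P hP hPX
  have pX : 0 < X := by linarith
  have pP : 0 < P := by linarith
  have X2 : X ^ (2 - κ) ≤ X ^ 2 := by
    rw [← Real.rpow_natCast X 2]
    exact Real.rpow_le_rpow_of_exponent_le hX (by push_cast; linarith)
  have hPX2 : P ≤ 2 * X ^ 2 := by linarith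
  set z := Real.exp 1 * k2 * P with hz
  set mid : Finset ℕ := (Finset.range (⌊z / X⌋₊ + 1)).filter
    (fun m : ℕ => k1 * P ≤ m * X ∧ m * X ≤ z) with hmid
  have hm1 : ∀ m ∈ mid, k1 * P ≤ m * X ∧ m * X ≤ z := fun m hm => (Finset.mem_filter.1 hm).2
  have hm2 : ∀ m ∉ mid, m * X < k1 * P ∨ z < m * X := by
    intro m hm
    by_contra! hcon
    apply hm
    rw [hmid, Finset.mem_filter]
    refine ⟨?_, hcon⟩
    rw [Finset.mem_range, Nat.lt_succ_iff]
    apply Nat.le_floor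
    rw [le_div_iff₀ pX]; exact hcon.2
  have i1 := H2 X hX P hP hPX2 mid hm1
  have cF := FW_cont W c M X
  refine (exp_subst (F := fun t => ‖FW W c M X t‖ ^ 4) (by fun_prop) (fun t => by positivity) pP).trans ?_
  set E := K1 * (X / P ^ 2 + 1 / X) with hE
  have pE : 0 < E := by positivity
  have cI : Continuous (fun v => ‖X * ∑ m ∈ mid, II c M V (P * Real.exp v) (m * X)‖ ^ 4) := by
    have : ∀ m ∈ mid, Continuous (fun v => II c M V (P * Real.exp v) (m * X)) := fun m _ =>
      (II_cont cV0 (m * X)).comp (by fun_prop)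
    have := continuous_finsetSum mid this
    fun_prop
  have i2 : ∫ v in (0:ℝ)..1, ‖FW W c M X (P * Real.exp v)‖ ^ 4 ≤
      ∫ v in (0:ℝ)..1, (8 * (‖X * ∑ m ∈ mid, II c M V (P * Real.exp v) (m * X)‖ ^ 4 + E ^ 4)) := by
    apply intervalIntegral.integral_mono_on zero_le_one
    · apply Continuous.intervalIntegrable; fun_prop
    · apply Continuous.intervalIntegrable; fun_prop
    · intro v hv
      have e1 : 1 ≤ Real.exp v := Real.one_le_exp hv.1
      have e2 : Real.exp v ≤ Real.exp 1 := Real.exp_le_exp.2 hv.2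
      have hp := H1 X hX (P * Real.exp v) (by positivity) mid (by
        intro m hm
        rcases hm2 m hm with h | h
        · left
          refine h.le.trans ?_
          exact mul_le_mul_of_nonneg_left (by nlinarith) pk1.le
        · right
          refine le_trans ?_ h.le
          calc k2 * (P * Real.exp v) ≤ k2 * (P * Real.exp 1) := by gcongr
            _ = z := by rw [hz]; ring)
      have hp2 : ‖FW W c M X (P * Real.exp v) - X * ∑ m ∈ mid, II c M V (P * Real.exp v) (m * X)‖ ≤ E := by
        refine hp.trans ?_
        rw [hE]
        have : P ≤ P * Real.exp v := by nlinarith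
        gcongr
      have hp3 : ‖FW W c M X (P * Real.exp v)‖ ≤ ‖X * ∑ m ∈ mid, II c M V (P * Real.exp v) (m * X)‖ + E := by
        have := norm_sub_norm_le (FW W c M X (P * Real.exp v)) (X * ∑ m ∈ mid, II c M V (P * Real.exp v) (m * X))
        linarith
      exact (pow_le_pow_left₀ (norm_nonneg _) hp3 4).trans (four_add _ _ (norm_nonneg _) pE.le)
  rw [intervalIntegral.integral_const_mul, intervalIntegral.integral_add
    (cI.intervalIntegrable _ _) (by simp)] at i2
  simp only [intervalIntegral.integral_const, sub_zero, one_smul] at i2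
  have hE4 : P * E ^ 4 ≤ 16 * K1 ^ 4 * 2 * X ^ 4 := by
    have q1 : X / P ^ 2 ≤ X / P := by
      apply div_le_div_of_nonneg_left pX.le pP; nlinarith
    have q2 : 1 / X ≤ 2 * X / P := by
      rw [div_le_div_iff₀ pX pP]; nlinarith
    have q3 : X / P ≤ X := div_le_self pX.le hP
    have q4 : E ≤ K1 * (X / P ^ 2 + 1 / X) := le_rfl
    have q5 : E ^ 4 ≤ 8 * (K1 ^ 4 * ((X / P ^ 2) ^ 4 + (1 / X) ^ 4)) := by
      rw [hE, mul_pow]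
      have := four_add (X / P ^ 2) (1 / X) (by positivity) (by positivity)
      have k : 0 < K1 ^ 4 := by positivity
      have := mul_le_mul_of_nonneg_left this k.le
      linarith
    have q6 : P * (X / P ^ 2) ^ 4 ≤ X ^ 4 := by
      have : P * (X / P ^ 2) ^ 4 = X ^ 4 / P ^ 7 := by field_simp
      rw [this]
      exact div_le_self (by positivity) (one_le_pow₀ hP)
    have q7 : P * (1 / X) ^ 4 ≤ 2 * X ^ 4 := by
      have h1 : (1 / X) ^ 4 ≤ 1 := pow_le_one₀ (by positivity) (by rw [div_le_one pX]; exact hX)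
      have h2 : X ^ 2 ≤ X ^ 4 := pow_le_pow_right₀ hX (by norm_num)
      nlinarith
    have k : 0 < K1 ^ 4 := by positivity
    have h4 : 0 < X ^ 4 := by positivity
    calc P * E ^ 4 ≤ P * (8 * (K1 ^ 4 * ((X / P ^ 2) ^ 4 + (1 / X) ^ 4))) := by gcongr
      _ = 8 * K1 ^ 4 * (P * (X / P ^ 2) ^ 4 + P * (1 / X) ^ 4) := by ring
      _ ≤ 8 * K1 ^ 4 * (X ^ 4 + 2 * X ^ 4) := by gcongr
      _ ≤ _ := by have := mul_pos k h4; linarith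
  have hm4 : P * (K2 * (X ^ (2 - θ) * P ^ θ)) ≤ K2 * 2 ^ (1 + θ) * X ^ 4 := by
    have r1 : P * P ^ θ = P ^ (1 + θ) := by rw [Real.rpow_add pP, Real.rpow_one]
    have r2 : P ^ (1 + θ) ≤ 2 ^ (1 + θ) * X ^ (2 + θ) := by
      calc P ^ (1 + θ) ≤ (2 * X ^ (2 - κ)) ^ (1 + θ) :=
            Real.rpow_le_rpow pP.le hPX (by linarith)
        _ = _ := by
            rw [Real.mul_rpow (by norm_num) (by positivity), ← Real.rpow_mul pX.le, hκ2]
    have r3 : X ^ (2 - θ) * X ^ (2 + θ) = X ^ 4 := by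
      rw [← Real.rpow_add pX, ← Real.rpow_natCast X 4]; congr 1; push_cast; ring
    calc P * (K2 * (X ^ (2 - θ) * P ^ θ)) = K2 * X ^ (2 - θ) * (P * P ^ θ) := by ring
      _ ≤ K2 * X ^ (2 - θ) * (2 ^ (1 + θ) * X ^ (2 + θ)) := by rw [r1]; gcongr
      _ = K2 * 2 ^ (1 + θ) * (X ^ (2 - θ) * X ^ (2 + θ)) := by ring
      _ = _ := by rw [r3]
  calc _ ≤ Real.exp 1 * P * (8 * (K2 * (X ^ (2 - θ) * P ^ θ) + E ^ 4)) := by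
        apply mul_le_mul_of_nonneg_left _ (by positivity)
        linarith
    _ = Real.exp 1 * (8 * (P * (K2 * (X ^ (2 - θ) * P ^ θ)) + P * E ^ 4)) := by ring
    _ ≤ Real.exp 1 * (8 * (K2 * 2 ^ (1 + θ) * X ^ 4 + 16 * K1 ^ 4 * 2 * X ^ 4)) := by gcongr
    _ = _ := by ring

lemma FW_bound {c M B θ κ : ℝ} (hc : 1 < c) (hM : 0 < M) (hθ : 0 < θ) (hκ : κ = θ / (1 + θ))
    {W V V1 V2 : ℝ → ℝ} (hB : 0 ≤ B)
    (cW : Continuous W) (hWV : ∀ x, V x = W x * Real.exp x)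
    (v1 : ∀ x, HasDerivAt V (V1 x) x) (v2 : ∀ x, HasDerivAt V1 (V2 x) x) (cV : Continuous V2)
    (B0 : ∀ x, |V x| ≤ B) (B1 : ∀ x, |V1 x| ≤ B) (B2 : ∀ x, |V2 x| ≤ B)
    (hW : ∀ x, M ≤ |x| → W x = 0) (hV1 : ∀ x, M ≤ |x| → V1 x = 0)
    (W0 : ∀ x, 0 ≤ W x) (W1 : ∀ x, W x ≤ 1)
    (hH : HH (c * (1 / (c - 1))) θ) :
    ∃ K > 0, ∀ X ≥ 1,
      ∫ t in (0:ℝ)..(2 * X ^ (2 - κ)), ‖FW W c M X t‖ ^ 4 ≤ K * X ^ 4 * (2 * Real.log X + 3) := by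
  obtain ⟨K, pK, H⟩ := block hc hM hθ hκ hB cW hWV v1 v2 cV B0 B1 B2 hW hV1 hH
  have pκ : 0 < κ := by rw [hκ]; positivity
  have κ1 : κ < 1 := by rw [hκ, div_lt_one (by linarith)]; linarith
  set K' := max K (Real.exp M ^ 4) with hK'
  refine ⟨K', lt_of_lt_of_le pK (le_max_left _ _), ?_⟩
  intro X hX
  have pX : 0 < X := by linarith
  have pK' : 0 < K' := lt_of_lt_of_le pK (le_max_left _ _)
  have o : 1 ≤ X ^ (2 - κ) := Real.one_le_rpow hX (by linarith)
  have cF := FW_cont W c M X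
  have tb : ∀ t, ‖FW W c M X t‖ ≤ X * Real.exp M := by
    intro t
    unfold FW
    refine (norm_sum_le _ _).trans ?_
    refine (Finset.sum_le_card_nsmul _ _ 1 ?_).trans ?_
    · intro n _
      rw [norm_mul, norm_e, mul_one, Complex.norm_real, Real.norm_of_nonneg (W0 _)]
      exact W1 _
    · rw [Nat.card_Icc, nsmul_eq_mul, mul_one]
      simp only [Nat.add_sub_cancel]
      exact Nat.floor_le (by positivity)
  have h := eadic (F := fun t => ‖FW W c M X t‖ ^ 4) (T := 2 * X ^ (2 - κ)) (B := K' * X ^ 4)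
    (by fun_prop) (fun t => by positivity) (by linarith) (by positivity) ?_ ?_
  · refine h.trans ?_
    apply mul_le_mul_of_nonneg_left _ (by positivity)
    rw [Real.log_mul (by norm_num) (by positivity), Real.log_rpow pX]
    have l0 := Real.log_nonneg hX
    have l2 := Real.log_two_lt_d9
    nlinarith
  · have : ∫ t in (0:ℝ)..1, ‖FW W c M X t‖ ^ 4 ≤ ∫ t in (0:ℝ)..1, (X * Real.exp M) ^ 4 := by
      apply intervalIntegral.integral_mono_on zero_le_one
      · apply Continuous.intervalIntegrable; fun_prop
      · simp
      · intro t _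
        exact pow_le_pow_left₀ (norm_nonneg _) (tb t) 4
    refine this.trans ?_
    simp only [intervalIntegral.integral_const, sub_zero, one_smul]
    rw [mul_pow, mul_comm]
    apply mul_le_mul_of_nonneg_right (le_max_right _ _) (by positivity)
  · intro P hP hPX
    refine (H X hX P hP hPX).trans ?_
    apply mul_le_mul_of_nonneg_right (le_max_left _ _) (by positivity)


lemma HH_mono {α θ θ' : ℝ} (h : θ ≤ θ') (H : HH α θ) : HH α θ' := by
  intro R hR
  obtain ⟨C, pC, hC⟩ := H R hR
  refine ⟨C, pC, fun Z hZ s hs a ha => (hC Z hZ s hs a ha).trans ?_⟩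
  apply mul_le_mul_of_nonneg_left _ pC.le
  exact Real.rpow_le_rpow_of_exponent_le hZ (by linarith)

lemma HH_step {c θ ε : ℝ} (hc : 1 < c) (hθ : 0 < θ) (hε : 0 < ε) (hH : HH (c * (1 / (c - 1))) θ) :
    HH c (θ / (1 + θ) + ε) := by
  intro R hR
  have hL : 0 ≤ Real.log R := Real.log_nonneg hR
  obtain ⟨W, V, V1, V2, B, hB, cW, hWV, v1, v2, cV, B0, B1, B2, hW, hV1, W0, W1, WL⟩ :=
    bump_exists (Real.log R) hL
  set M := Real.log R + 3 with hM
  have pM : 0 < M := by linarith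
  set κ := θ / (1 + θ) with hκ
  have pκ : 0 < κ := by positivity
  have κ1 : κ < 1 := by rw [hκ, div_lt_one (by linarith)]; linarith
  obtain ⟨K, pK, HK⟩ := FW_bound hc pM hθ hκ hB cW hWV v1 v2 cV B0 B1 B2 hW hV1 W0 W1 hH
  refine ⟨8 * K * (2 / ε + 3), by positivity, ?_⟩
  intro X hX s hs a ha
  have pX : 0 < X := by linarith
  have pR : 0 < R := by linarith
  have l0 := Real.log_nonneg hX
  set T0 := X ^ (2 - κ) with hT0
  have pT0 : 0 < T0 := by positivity
  have sub : s ⊆ Finset.Icc 1 ⌊X * Real.exp M⌋₊ := by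
    intro n hn
    have h := hs n hn
    have h1 : (0:ℝ) < n := lt_of_lt_of_le (by positivity) h.1
    rw [Finset.mem_Icc]
    refine ⟨by exact_mod_cast h1, Nat.le_floor (h.2.trans ?_)⟩
    exact le_mul_of_one_le_right pX.le (Real.one_le_exp pM.le)
  have hWs : ∀ n ∈ s, W (Real.log (n / X)) = 1 := by
    intro n hn
    have h := hs n hn
    have h1 : (0:ℝ) < n := lt_of_lt_of_le (by positivity) h.1
    apply WL
    rw [abs_le]; constructor
    · rw [← Real.log_inv]
      apply Real.log_le_log (by positivity)
      rw [le_div_iff₀ pX, mul_comm, ← div_eq_mul_inv]; exact h.1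
    · refine le_trans (Real.log_nonpos (by positivity) ?_) hL
      rw [div_le_one pX]; exact h.2
  have cov := covering (F := fun t => ‖∑ n ∈ s, a n * e (t * ((n:ℝ) / X) ^ c)‖ ^ 4)
    (by fun_prop) (fun t => by positivity) (T0 := T0) (T := X ^ 2)
    (B := 4 * (K * X ^ 4 * (2 * Real.log X + 3))) pT0 (by positivity) (by positivity) (by
      intro k
      set b : ℕ → ℂ := fun n => if n ∈ s then a n * e (k * T0 * ((n:ℝ) / X) ^ c) else 0 with hb
      have m4 := majorant4 (Finset.Icc 1 ⌊X * Real.exp M⌋₊) b (fun n => W (Real.log (n / X)))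
        (fun n => ((n:ℝ) / X) ^ c) (by
          intro n _
          by_cases hn : n ∈ s
          · simp only [hb, if_pos hn]
            rw [norm_mul, norm_e, mul_one, hWs n hn]; exact ha n hn
          · simp only [hb, if_neg hn, norm_zero]; exact W0 _) T0 pT0
      have eq : ∀ t : ℝ, ∑ n ∈ s, a n * e ((t + k * T0) * ((n:ℝ) / X) ^ c) =
          ∑ n ∈ Finset.Icc 1 ⌊X * Real.exp M⌋₊, b n * e (t * ((n:ℝ) / X) ^ c) := by
        intro t
        rw [← Finset.sum_subset sub (by intro n _ hn; simp [hb, hn])]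
        refine Finset.sum_congr rfl fun n hn => ?_
        simp only [hb, if_pos hn]
        rw [add_mul, e_add]; ring
      simp only [eq]
      refine m4.trans ?_
      apply mul_le_mul_of_nonneg_left _ (by norm_num)
      exact HK X hX)
  refine cov.trans ?_
  have q1 : X ^ 2 / T0 = X ^ κ := by
    rw [hT0, ← Real.rpow_natCast X 2, ← Real.rpow_sub pX]; congr 1; push_cast; ring
  have q2 : 1 ≤ X ^ κ := Real.one_le_rpow hX pκ.le
  have q3 : 1 ≤ X ^ ε := Real.one_le_rpow hX hε.le
  have q4 := Real.log_le_rpow_div pX.le hε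
  have q5 : 2 * Real.log X + 3 ≤ (2 / ε + 3) * X ^ ε := by
    have : X ^ ε / ε = 1 / ε * X ^ ε := by ring
    have h2 : (2 / ε + 3) * X ^ ε = 2 * (X ^ ε / ε) + 3 * X ^ ε := by ring
    linarith
  have q6 : X ^ (4 + (κ + ε)) = X ^ 4 * X ^ κ * X ^ ε := by
    rw [← Real.rpow_natCast X 4, ← Real.rpow_add pX, ← Real.rpow_add pX]; congr 1; push_cast; ring
  rw [q1, q6]
  calc (X ^ κ + 1) * (4 * (K * X ^ 4 * (2 * Real.log X + 3)))
      ≤ (2 * X ^ κ) * (4 * (K * X ^ 4 * ((2 / ε + 3) * X ^ ε))) := by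
        gcongr; linarith
    _ = _ := by ring

lemma HH_all {c η : ℝ} (hc : 1 < c) (hη : 0 < η) : HH c η := by
  set c' := c * (1 / (c - 1)) with hc'
  have hc0 : 0 < c - 1 := by linarith
  have h1 : c' - 1 = 1 / (c - 1) := by rw [hc']; field_simp; ring
  have hc1 : 1 < c' := by have : 0 < 1 / (c - 1) := by positivity
                          linarith
  have h2 : c' * (1 / (c' - 1)) = c := by rw [h1, hc']; field_simp
  set q := 1 / (1 + η / 2) with hq
  have pq : 0 < q := by positivity
  have q1 : q < 1 := by rw [hq, div_lt_one (by positivity)]; linarith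
  have key : ∀ n : ℕ, HH c (max η (2 * q ^ n)) ∧ HH c' (max η (2 * q ^ n)) := by
    intro n
    induction n with
    | zero =>
      exact ⟨HH_mono (by simp) (HH_trivial c), HH_mono (by simp) (HH_trivial c')⟩
    | succ n ih =>
      set t := max η (2 * q ^ n) with ht
      set t' := max η (2 * q ^ (n + 1)) with ht'
      have tη : η ≤ t := le_max_left _ _
      have pt : 0 < t := by linarith
      have a1 : t / (1 + t) < t * q := by
        rw [hq, mul_one_div]
        apply div_lt_div_of_pos_left pt (by positivity); linarith
      have a2 : t * q ≤ t' := by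
        rw [ht, max_mul_of_nonneg _ _ pq.le]
        apply max_le_max
        · nlinarith
        · rw [pow_succ]; linarith
      have pos : 0 < t' - t / (1 + t) := by linarith
      have e1 : t / (1 + t) + (t' - t / (1 + t)) = t' := by ring
      constructor
      · have := HH_step hc pt pos ih.2
        rwa [e1] at this
      · have := HH_step hc1 pt pos (by rw [h2]; exact ih.1)
        rwa [e1] at this
  obtain ⟨n, hn⟩ := exists_pow_lt_of_lt_one (show 0 < η / 2 by positivity) q1
  have := (key n).1
  rwa [max_eq_left (by linarith)] at this

/-- formula (3.9): for `1 < c < 37/18`, `c ≠ 2`, sufficiently small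
`η > 0`, and sufficiently large `X`, with `τ = X^{1−c−η}`, `K = (log X)⁵`,
`ε = (log X)⁻²`, and a smoothing function `φ` as in Lemma 2.1 (with `a = 9ε/10`,
`b = ε/10`, `k = ⌈log X⌉`) with Fourier transform `Φ`, one has
`∫_τ^K |S(x)|⁴ |Φ(x)|² dx ≪_{c,η} (X^{4−c} + X²) X^η`. -/
theorem stmt19 (c : ℝ) (hc1 : 1 < c) (hc2 : c < 37 / 18) (hc3 : c ≠ 2) :
    ∃ η₀ > 0, ∀ η : ℝ, 0 < η → η < η₀ →
    ∃ C > 0, ∃ X₀ : ℝ, ∀ X ≥ X₀,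
    ∀ τ K ε : ℝ, ∀ k : ℕ, ∀ a b : ℝ,
      τ = X ^ (1 - c - η) → K = (Real.log X) ^ 5 → ε = ((Real.log X) ^ 2)⁻¹ →
      k = ⌈Real.log X⌉₊ → a = 9 * ε / 10 → b = ε / 10 →
    ∀ φ : ℝ → ℝ, ∀ Φ : ℝ → ℂ,
      ContDiff ℝ (k : ℕ∞) φ →
      (∀ y, |y| ≤ a - b → φ y = 1) →
      (∀ y, a - b < |y| → |y| < a + b → 0 < φ y ∧ φ y < 1) →
      (∀ y, a + b ≤ |y| → φ y = 0) →
      (∀ x, Φ x = ∫ y : ℝ, e (-(x * y)) * (φ y : ℂ)) →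
      (∀ x, ‖Φ x‖ ≤ 2 * a) →
      (∀ x : ℝ, x ≠ 0 → ‖Φ x‖ ≤
        min (1 / (Real.pi * |x|))
          (1 / (Real.pi * |x|) * ((k : ℝ) / (2 * Real.pi * |x| * b)) ^ k)) →
      (∫ x in τ..K, ‖S X c x‖ ^ 4 * ‖Φ x‖ ^ 2) ≤ C * (X ^ (4 - c) + X ^ 2) * X ^ η := by
  refine ⟨1, one_pos, fun η hη _ => ?_⟩
  obtain ⟨C0, pC0, H⟩ := HH_long (HH_all hc1 (half_pos hη)) 2 (by norm_num)
  have pδ : 0 < η / 18 := by positivity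
  refine ⟨C0 * (1 / (η / 18) ^ 9), by positivity, Real.exp 2, ?_⟩
  intro X hX τ K ε k a b hτ hK hε hk ha hb φ Φ _ _ _ _ _ hΦ _
  have pX : 0 < X := lt_of_lt_of_le (Real.exp_pos _) hX
  have L2 : 2 ≤ Real.log X := (Real.le_log_iff_exp_le pX).2 hX
  have X1 : 1 ≤ X := (Real.one_le_exp (by norm_num)).trans hX
  set L := Real.log X with hL
  have pL : 0 < L := by linarith
  have K1 : 1 ≤ K := by rw [hK]; exact one_le_pow₀ (by linarith)
  have pτ : 0 < τ := by rw [hτ]; positivity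
  have τ1 : τ ≤ 1 := by rw [hτ]; exact Real.rpow_le_one_of_one_le_of_nonpos X1 (by linarith)
  have Φ1 : ∀ x, ‖Φ x‖ ≤ 1 := by
    intro x
    refine (hΦ x).trans ?_
    have : ε ≤ 1 / 4 := by
      rw [hε, inv_eq_one_div]
      apply one_div_le_one_div_of_le (by norm_num); nlinarith
    rw [ha]; linarith
  have pXc : 0 < X ^ c := by positivity
  set s := (Finset.range (⌈X⌉₊ + 1)).filter
      (fun p : ℕ => p.Prime ∧ X / 2 < (p : ℝ) ∧ (p : ℝ) ≤ X) with hs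
  set G : ℝ → ℝ := fun t => ‖∑ p ∈ s, (Real.log p : ℂ) * e (t * ((p : ℝ) / X) ^ c)‖ ^ 4 with hG
  have SG : ∀ x, ‖S X c x‖ ^ 4 = G (x * X ^ c) := by
    intro x
    simp only [hG]
    suffices h : S X c x = ∑ p ∈ s, (Real.log p : ℂ) * e (x * X ^ c * ((p : ℝ) / X) ^ c) by rw [h]
    unfold S
    refine Finset.sum_congr rfl fun p _ => ?_
    rw [Real.div_rpow (by positivity) pX.le]
    congr 2
    field_simp
  have cG : Continuous G := by simp only [hG]; fun_prop
  have cS : Continuous (fun x => ‖S X c x‖ ^ 4) := by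
    simp only [SG]; fun_prop
  have main : ∫ t in (0:ℝ)..(K * X ^ c), G t ≤
      (K * X ^ c / X ^ 2 + 1) * (C0 * L ^ 4 * X ^ (4 + η / 2)) := by
    refine H X X1 s ?_ (fun p => (Real.log p : ℂ)) L pL.le ?_ (K * X ^ c) (by positivity)
    · intro n hn
      have := (Finset.mem_filter.1 hn).2
      exact ⟨this.2.1.le, this.2.2⟩
    · intro n hn
      have h := (Finset.mem_filter.1 hn).2
      have n1 : (1:ℝ) ≤ n := by exact_mod_cast h.1.one_lt.le
      rw [Complex.norm_real, Real.norm_of_nonneg (Real.log_nonneg n1)]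
      exact Real.log_le_log (by linarith) h.2.2
  have b1 : ∫ x in τ..K, ‖S X c x‖ ^ 4 * ‖Φ x‖ ^ 2 ≤ ∫ x in (0:ℝ)..K, ‖S X c x‖ ^ 4 := by
    have i0 : ∫ x in τ..K, ‖S X c x‖ ^ 4 ≤ ∫ x in (0:ℝ)..K, ‖S X c x‖ ^ 4 := by
      apply intervalIntegral.integral_mono_interval pτ.le (by linarith) le_rfl
      · exact Filter.Eventually.of_forall fun x => by positivity
      · exact cS.intervalIntegrable _ _
    by_cases hi : IntervalIntegrable (fun x => ‖S X c x‖ ^ 4 * ‖Φ x‖ ^ 2) volume τ K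
    · refine le_trans ?_ i0
      apply intervalIntegral.integral_mono_on (by linarith) hi (cS.intervalIntegrable _ _)
      intro x _
      exact mul_le_of_le_one_right (by positivity) (pow_le_one₀ (norm_nonneg _) (Φ1 x))
    · rw [intervalIntegral.integral_undef hi]
      exact intervalIntegral.integral_nonneg (by linarith) fun x _ => by positivity
  have b2 : ∫ x in (0:ℝ)..K, ‖S X c x‖ ^ 4 = (X ^ c)⁻¹ * ∫ t in (0:ℝ)..(K * X ^ c), G t := by
    simp only [SG]
    rw [intervalIntegral.integral_comp_mul_right G pXc.ne', zero_mul, smul_eq_mul]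
  rw [b2] at b1
  have L9 : L ^ 9 ≤ 1 / (η / 18) ^ 9 * X ^ (η / 2) := by
    have h := pow_le_pow_left₀ pL.le (Real.log_le_rpow_div pX.le pδ) 9
    rw [div_pow, ← Real.rpow_natCast (X ^ (η / 18)) 9, ← Real.rpow_mul pX.le] at h
    have : η / 18 * ((9:ℕ):ℝ) = η / 2 := by push_cast; ring
    rw [this] at h
    rw [one_div_mul_eq_div]; exact h
  have L4 : L ^ 4 ≤ L ^ 9 := pow_le_pow_right₀ (by linarith) (by norm_num)
  have r1 : X ^ (4 + η / 2) = X ^ 4 * X ^ (η / 2) := by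
    rw [Real.rpow_add pX]; norm_num
  have r2 : X ^ (4 - c) = X ^ 4 / X ^ c := by
    rw [Real.rpow_sub pX]; norm_num
  have r3 : X ^ η = X ^ (η / 2) * X ^ (η / 2) := by
    rw [← Real.rpow_add pX]; congr 1; ring
  have pη : 0 < X ^ (η / 2) := by positivity
  calc _ ≤ (X ^ c)⁻¹ * ((K * X ^ c / X ^ 2 + 1) * (C0 * L ^ 4 * X ^ (4 + η / 2))) :=
        b1.trans (mul_le_mul_of_nonneg_left main (by positivity))
    _ = C0 * X ^ (η / 2) * (L ^ 9 * X ^ 2 + L ^ 4 * (X ^ 4 / X ^ c)) := by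
        rw [r1, hK]; field_simp
    _ ≤ C0 * X ^ (η / 2) * (L ^ 9 * X ^ 2 + L ^ 9 * (X ^ 4 / X ^ c)) := by gcongr
    _ = C0 * X ^ (η / 2) * (X ^ 4 / X ^ c + X ^ 2) * L ^ 9 := by ring
    _ ≤ C0 * X ^ (η / 2) * (X ^ 4 / X ^ c + X ^ 2) * (1 / (η / 18) ^ 9 * X ^ (η / 2)) := by gcongr
    _ = _ := by rw [r2, r3]; ring
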